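/- arXiv:2303.17936 — 3 statements merged into one kernel-verified Lean document; each statement's English description precedes it below -/
import Mathlib

section
/- The weight-four modular form 𝒟 = (𝒫̃² − 𝒬)/64 on Γ₀(2) satisfies the third-order nonlinear ODE: for every τ ∈ ℍ, 4𝒟⁴(𝒟''')² − 6𝒟²𝒟'(6𝒟𝒟'' − 5(𝒟')²)𝒟''' + 16𝒟³(𝒟'')³ − 𝒟²(256𝒟³ − 21(𝒟')²)(𝒟'')² + 20𝒟(𝒟')²(32𝒟³ − 3(𝒟')²)𝒟'' + 25(𝒟')⁶ − 400𝒟³(𝒟')⁴ = 0. -/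
open Complex

noncomputable section

/-- The normalized derivative `F' = (2πi)⁻¹ dF/dτ`. -/
def nderiv (F : ℂ → ℂ) : ℂ → ℂ := fun τ => (2 * Real.pi * Complex.I)⁻¹ * deriv F τ

/-- `q = e^{2πiτ}`. -/
def qq (τ : ℂ) : ℂ := Complex.exp (2 * Real.pi * Complex.I * τ)

/-- The level-two Eisenstein series `𝒬(τ) = 1 + 16 Σ_{n≥1} (−1)ⁿ n³ qⁿ/(1−qⁿ)`. -/
def EQ : ℂ → ℂ := fun τ =>
  1 + 16 * ∑' n : ℕ, (-1 : ℂ) ^ (n + 1) * ((n : ℂ) + 1) ^ 3 * qq τ ^ (n + 1) / (1 - qq τ ^ (n + 1))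

/-- The level-two modular form `𝒫̃(τ) = 1 + 24 Σ_{n≥1} n qⁿ/(1+qⁿ)`. -/
def EPt : ℂ → ℂ := fun τ =>
  1 + 24 * ∑' n : ℕ, ((n : ℂ) + 1) * qq τ ^ (n + 1) / (1 + qq τ ^ (n + 1))

/-- The weight-four modular form `𝒟 = (𝒫̃² − 𝒬)/64` on `Γ₀(2)`. -/
def ED : ℂ → ℂ := fun τ => (EPt τ ^ 2 - EQ τ) / 64


section

open UpperHalfPlane hiding I
open scoped Manifold MatrixGroups ModularForm Topology
open Filter Derivative ModularGroup

/-- Levels-one cusp form of small weight vanishes. -/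
lemma level_one_zero {k : ℤ} (hk : k < 12) (F : ℍ → ℂ) (hF : MDiff F)
    (hS : F ∣[k] S = F) (hT : F ∣[k] T = F) (h0 : Tendsto F atImInfty (𝓝 0)) : F = 0 := by
  let f : CuspForm 𝒮ℒ k :=
    { toFun := F
      slash_action_eq' := by
        rintro A ⟨A, rfl⟩
        exact SlashInvariantForm.slash_action_generators_SL2Z hS hT A
      holo' := hF
      zero_at_cusps' := by
        intro c hc
        rw [Subgroup.IsArithmetic.isCusp_iff_isCusp_SL2Z] at hc
        rw [OnePoint.isZeroAt_iff_forall_SL2Z hc]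
        intro γ _
        rw [SlashInvariantForm.slash_action_generators_SL2Z hS hT]
        exact h0 }
  have := rank_zero_iff_forall_zero.mp (CuspForm.rank_eq_zero_of_weight_lt_twelve hk) f
  exact congrArg (fun g : CuspForm 𝒮ℒ k => (g : ℍ → ℂ)) this

/-- A triple of conjugates under SL(2,ℤ) of a form for Γ₀(2), with limits at the cusps. -/
structure Trip (k : ℤ) (y : Fin 3 → ℍ → ℂ) (a b : ℂ) : Prop where
  holo : ∀ i, MDiff (y i)
  T0 : y 0 ∣[k] T = y 0
  T1 : y 1 ∣[k] T = y 2
  T2 : y 2 ∣[k] T = y 1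
  S0 : y 0 ∣[k] S = y 1
  S1 : y 1 ∣[k] S = y 0
  S2 : y 2 ∣[k] S = y 2
  l0 : Tendsto (y 0) atImInfty (𝓝 a)
  l1 : Tendsto (y 1) atImInfty (𝓝 b)
  l2 : Tendsto (y 2) atImInfty (𝓝 b)

namespace Trip
variable {k k' : ℤ} {y z : Fin 3 → ℍ → ℂ} {a b a' b' : ℂ}

lemma add (h : Trip k y a b) (h' : Trip k z a' b') : Trip k (y + z) (a + a') (b + b') where
  holo i := (h.holo i).add (h'.holo i)
  T0 := by simp [SlashAction.add_slash, h.T0, h'.T0]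
  T1 := by simp [SlashAction.add_slash, h.T1, h'.T1]
  T2 := by simp [SlashAction.add_slash, h.T2, h'.T2]
  S0 := by simp [SlashAction.add_slash, h.S0, h'.S0]
  S1 := by simp [SlashAction.add_slash, h.S1, h'.S1]
  S2 := by simp [SlashAction.add_slash, h.S2, h'.S2]
  l0 := h.l0.add h'.l0
  l1 := h.l1.add h'.l1
  l2 := h.l2.add h'.l2

lemma mul (h : Trip k y a b) (h' : Trip k' z a' b') : Trip (k + k') (y * z) (a * a') (b * b') where
  holo i := (h.holo i).mul (h'.holo i)
  T0 := by simp [ModularForm.mul_slash_SL2, h.T0, h'.T0]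
  T1 := by simp [ModularForm.mul_slash_SL2, h.T1, h'.T1]
  T2 := by simp [ModularForm.mul_slash_SL2, h.T2, h'.T2]
  S0 := by simp [ModularForm.mul_slash_SL2, h.S0, h'.S0]
  S1 := by simp [ModularForm.mul_slash_SL2, h.S1, h'.S1]
  S2 := by simp [ModularForm.mul_slash_SL2, h.S2, h'.S2]
  l0 := h.l0.mul h'.l0
  l1 := h.l1.mul h'.l1
  l2 := h.l2.mul h'.l2

lemma smul (c : ℂ) (h : Trip k y a b) : Trip k (c • y) (c * a) (c * b) where
  holo i := (h.holo i).const_smul c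
  T0 := by simp [ModularForm.SL_smul_slash, h.T0]
  T1 := by simp [ModularForm.SL_smul_slash, h.T1]
  T2 := by simp [ModularForm.SL_smul_slash, h.T2]
  S0 := by simp [ModularForm.SL_smul_slash, h.S0]
  S1 := by simp [ModularForm.SL_smul_slash, h.S1]
  S2 := by simp [ModularForm.SL_smul_slash, h.S2]
  l0 := h.l0.const_mul c
  l1 := h.l1.const_mul c
  l2 := h.l2.const_mul c

/-- The trace of a triple with zero limits vanishes for small weight. -/
lemma trace (h : Trip k y 0 0) (hk : k < 12) (τ : ℍ) : y 0 τ + y 1 τ + y 2 τ = 0 := by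
  have := level_one_zero hk (y 0 + y 1 + y 2) (((h.holo 0).add (h.holo 1)).add (h.holo 2))
    (by simp only [SlashAction.add_slash, h.S0, h.S1, h.S2]; ring)
    (by simp only [SlashAction.add_slash, h.T0, h.T1, h.T2]; ring)
    (by
      have := (h.l0.add h.l1).add h.l2
      simp only [add_zero] at this
      exact this)
  exact congrFun this τ

lemma vanish {x : Fin 3 → ℍ → ℂ} (hx : Trip 2 x 1 (-1 / 2)) (h : Trip k y 0 0) (hk : k ≤ 6)
    (τ : ℍ) : y 0 τ = 0 := by
  have t0 := h.trace (by lia)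
  have t1 := fun τ => (by simpa using h.mul hx : Trip (k + 2) (y * x) 0 0).trace (by lia) τ
  have t2 := fun τ =>
    (by simpa using (h.mul hx).mul hx : Trip (k + 2 + 2) (y * x * x) 0 0).trace (by lia) τ
  have key : ∀ τ, y 0 τ * ((x 0 τ - x 1 τ) * (x 0 τ - x 2 τ)) = 0 := by
    intro τ
    have a0 := t0 τ
    have a1 := t1 τ
    have a2 := t2 τ
    simp only [Pi.mul_apply] at a0 a1 a2
    linear_combination a2 - (x 1 τ + x 2 τ) * a1 + x 1 τ * x 2 τ * a0
  have hz : ∀ᶠ τ in atImInfty, y 0 τ = 0 := by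
    have l : Tendsto (fun τ => (x 0 τ - x 1 τ) * (x 0 τ - x 2 τ)) atImInfty
        (𝓝 ((1 - -1 / 2) * (1 - -1 / 2))) :=
      (hx.l0.sub hx.l1).mul (hx.l0.sub hx.l2)
    filter_upwards [l.eventually_ne (by norm_num : ((1 - -1 / 2) * (1 - -1 / 2) : ℂ) ≠ 0)] with τ hτ
    exact (mul_eq_zero.mp (key τ)).resolve_right hτ
  have hd := UpperHalfPlane.mdifferentiable_iff.mp (h.holo 0)
  obtain ⟨A, hA⟩ := (atImInfty_mem _).mp hz
  have han := hd.analyticOnNhd isOpen_upperHalfPlaneSet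
  let w : ℍ := ⟨⟨0, max A 0 + 1⟩, by simp; positivity⟩
  have hw : A < w.im := by
    have : w.im = max A 0 + 1 := rfl
    have := le_max_left A 0
    linarith
  have hev : (y 0 ∘ ofComplex) =ᶠ[𝓝 (w : ℂ)] 0 := by
    have : {v : ℂ | A < v.im ∧ 0 < v.im} ∈ 𝓝 (w : ℂ) :=
      ((isOpen_lt continuous_const Complex.continuous_im).inter
        (isOpen_lt continuous_const Complex.continuous_im)).mem_nhds ⟨hw, w.im_pos⟩
    filter_upwards [this] with v hv
    simp only [Function.comp_apply, ofComplex_apply_of_im_pos hv.2]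
    exact hA ⟨v, hv.2⟩ hv.1.le
  have := han.eqOn_zero_of_preconnected_of_eventuallyEq_zero
    (convex_halfSpace_im_gt 0).isPreconnected w.im_pos hev τ.im_pos
  simpa using this

end Trip

lemma tendsto_D {F : ℍ → ℂ} (hF : MDiff F) {a : ℂ} (h : Tendsto F atImInfty (𝓝 a)) :
    Tendsto (D F) atImInfty (𝓝 0) := by
  have h0 : IsZeroAtImInfty (fun τ => F τ - a) := by
    simpa [IsZeroAtImInfty, ZeroAtFilter] using h.sub_const a
  rw [isZeroAtImInfty_iff] at h0
  have hd := UpperHalfPlane.mdifferentiable_iff.mp hF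
  have hb : IsZeroAtImInfty (fun τ : ℍ => deriv (F ∘ ofComplex) τ) := by
    rw [isZeroAtImInfty_iff]
    intro ε hε
    obtain ⟨A, hA⟩ := h0 ε hε
    refine ⟨max A 0 + 2, fun z hz => ?_⟩
    have hm1 := le_max_left A 0
    have hm2 := le_max_right A 0
    have him : ∀ v ∈ Metric.closedBall (z : ℂ) 1, max A 0 + 1 ≤ v.im := by
      intro v hv
      have h1 : ‖v - z‖ ≤ 1 := by simpa [dist_eq_norm] using hv
      have h2 := (abs_le.mp ((Complex.abs_im_le_norm (v - z)).trans h1)).1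
      have : (z : ℂ).im = z.im := rfl
      simp at h2
      linarith
    have hsub : Metric.closedBall (z : ℂ) 1 ⊆ upperHalfPlaneSet := fun v hv => by
      have := him v hv
      show 0 < v.im
      linarith
    have := Complex.norm_deriv_le_of_forall_mem_sphere_norm_le (c := (z : ℂ)) (R := 1) (C := ε)
      (f := fun v => (F ∘ ofComplex) v - a) one_pos
      (DifferentiableOn.diffContOnCl (by
        rw [closure_ball _ one_ne_zero]
        exact (hd.mono hsub).sub_const a)) (by
        intro v hv
        have hv' := Metric.sphere_subset_closedBall hv
        have hi := him v hv'
        simp only [Function.comp_apply, ofComplex_apply_of_im_pos (hsub hv')]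
        exact hA ⟨v, hsub hv'⟩ (by show A ≤ v.im; linarith))
    simpa [Function.comp_def] using this
  have := Tendsto.const_mul ((2 * Real.pi * Complex.I)⁻¹ : ℂ) hb
  rw [mul_zero] at this
  exact this

open EisensteinSeries in
lemma Trip.serre {k : ℤ} {y : Fin 3 → ℍ → ℂ} {a b : ℂ} (hE : Tendsto E2 atImInfty (𝓝 1))
    (h : Trip k y a b) :
    Trip (k + 2) (fun i => serreDerivative k (y i)) (-(k / 12 * a)) (-(k / 12 * b)) where
  holo i := serreDerivative_mdifferentiable _ (h.holo i)
  T0 := by rw [serreDerivative_slash_equivariant (h.holo _), h.T0]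
  T1 := by rw [serreDerivative_slash_equivariant (h.holo _), h.T1]
  T2 := by rw [serreDerivative_slash_equivariant (h.holo _), h.T2]
  S0 := by rw [serreDerivative_slash_equivariant (h.holo _), h.S0]
  S1 := by rw [serreDerivative_slash_equivariant (h.holo _), h.S1]
  S2 := by rw [serreDerivative_slash_equivariant (h.holo _), h.S2]
  l0 := by
    have := (tendsto_D (h.holo 0) h.l0).sub ((hE.const_mul (k * 12⁻¹ : ℂ)).mul h.l0)
    rw [show (0 - (k : ℂ) * 12⁻¹ * 1 * a) = -(k / 12 * a) by ring] at this
    exact this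
  l1 := by
    have := (tendsto_D (h.holo 1) h.l1).sub ((hE.const_mul (k * 12⁻¹ : ℂ)).mul h.l1)
    rw [show (0 - (k : ℂ) * 12⁻¹ * 1 * b) = -(k / 12 * b) by ring] at this
    exact this
  l2 := by
    have := (tendsto_D (h.holo 2) h.l2).sub ((hE.const_mul (k * 12⁻¹ : ℂ)).mul h.l2)
    rw [show (0 - (k : ℂ) * 12⁻¹ * 1 * b) = -(k / 12 * b) by ring] at this
    exact this

/-- The point `2τ`. -/
def dbl (τ : ℍ) : ℍ := ⟨2 * (τ : ℂ), by simpa using τ.im_pos⟩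
/-- The point `τ/2`. -/
def hlf (τ : ℍ) : ℍ := ⟨(τ : ℂ) / 2, by simpa using τ.im_pos⟩
/-- The point `(τ+1)/2`. -/
def hlf1 (τ : ℍ) : ℍ := ⟨((τ : ℂ) + 1) / 2, by simpa using τ.im_pos⟩

/-- Auxiliary matrix. -/
def gam : SL(2, ℤ) := ⟨!![1, -1; 2, -1], by simp [Matrix.det_fin_two]⟩

lemma coeS1 (τ : ℍ) : ((S • τ : ℍ) : ℂ) = -1 / (τ : ℂ) := by
  rw [modular_S_smul]; simp [neg_div]
lemma coeT1 (τ : ℍ) : ((T • τ : ℍ) : ℂ) = (τ : ℂ) + 1 := by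
  rw [modular_T_smul]; simp [add_comm]
lemma coe_gam (τ : ℍ) : ((gam • τ : ℍ) : ℂ) = ((τ : ℂ) - 1) / (2 * τ - 1) := by
  rw [coe_specialLinearGroup_apply]; simp [gam, sub_eq_add_neg]
lemma denom_S' (τ : ℍ) : denom S τ = τ := by rw [ModularGroup.denom_apply]; simp [S]
lemma denom_T' (τ : ℍ) : denom T τ = 1 := by rw [ModularGroup.denom_apply]; simp [T]
lemma denom_gam (τ : ℍ) : denom gam τ = 2 * τ - 1 := by
  rw [ModularGroup.denom_apply]; simp [gam, sub_eq_add_neg]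

lemma dbl_S (τ : ℍ) : dbl (S • τ) = S • hlf τ := by
  ext; simp only [dbl, coeS1, hlf]; have := ne_zero τ; field_simp
lemma hlf_S (τ : ℍ) : hlf (S • τ) = S • dbl τ := by
  ext; simp only [dbl, coeS1, hlf]; have := ne_zero τ; field_simp
lemma hlf1_S (τ : ℍ) : hlf1 (S • τ) = gam • hlf1 τ := by
  ext; simp only [hlf1, coeS1, coe_gam]; have := ne_zero τ
  have h2 : 2 * (((τ : ℂ) + 1) / 2) - 1 = τ := by ring
  rw [h2]; field_simp; ring
lemma dbl_T (τ : ℍ) : dbl (T • τ) = T • T • dbl τ := by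
  ext; simp only [dbl, coeT1]; ring
lemma hlf_T (τ : ℍ) : hlf (T • τ) = hlf1 τ := by
  ext; simp only [hlf, hlf1, coeT1]
lemma hlf1_T (τ : ℍ) : hlf1 (T • τ) = T • hlf τ := by
  ext; simp only [hlf, hlf1, coeT1]; ring

lemma tendsto_dbl : Tendsto dbl atImInfty atImInfty := by
  refine tendsto_comap_iff.mpr ?_
  have : UpperHalfPlane.im ∘ dbl = fun τ => 2 * UpperHalfPlane.im τ := by
    ext τ; simp only [Function.comp_apply, dbl, UpperHalfPlane.im]; simp
  rw [this]
  exact tendsto_comap.const_mul_atTop two_pos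
lemma tendsto_hlf : Tendsto hlf atImInfty atImInfty := by
  refine tendsto_comap_iff.mpr ?_
  have : UpperHalfPlane.im ∘ hlf = fun τ => UpperHalfPlane.im τ / 2 := by
    ext τ; simp only [Function.comp_apply, hlf, UpperHalfPlane.im]; simp
  rw [this]
  exact tendsto_comap.atTop_div_const two_pos
lemma tendsto_hlf1 : Tendsto hlf1 atImInfty atImInfty := by
  refine tendsto_comap_iff.mpr ?_
  have : UpperHalfPlane.im ∘ hlf1 = fun τ => UpperHalfPlane.im τ / 2 := by
    ext τ; simp only [Function.comp_apply, hlf1, UpperHalfPlane.im]; simp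
  rw [this]
  exact tendsto_comap.atTop_div_const two_pos

lemma mdiff_comp {F : ℍ → ℂ} (hF : MDiff F) (p : ℍ → ℍ) (g : ℂ → ℂ) (hg : Differentiable ℂ g)
    (hp : ∀ τ, ((p τ : ℍ) : ℂ) = g τ) : MDiff (fun τ => F (p τ)) := by
  rw [UpperHalfPlane.mdifferentiable_iff] at hF ⊢
  have hm : Set.MapsTo g upperHalfPlaneSet upperHalfPlaneSet := by
    intro v hv
    have := (p ⟨v, hv⟩).im_pos
    rw [← coe_im, hp] at this
    exact this
  refine (hF.comp hg.differentiableOn hm).congr fun v hv => ?_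
  simp only [Function.comp_apply, ofComplex_apply_of_im_pos hv, ofComplex_apply_of_im_pos (hm hv)]
  congr 1
  ext
  exact hp _

lemma slash_S' (f : ℍ → ℂ) (k : ℤ) (τ : ℍ) : (f ∣[k] S) τ = f (S • τ) * (τ : ℂ) ^ (-k) := by
  rw [ModularForm.SL_slash_apply, denom_S']
lemma slash_T' (f : ℍ → ℂ) (k : ℤ) (τ : ℍ) : (f ∣[k] T) τ = f (T • τ) := by
  rw [ModularForm.SL_slash_apply, denom_T']; simp

lemma trip_const {k : ℤ} {G : ℍ → ℂ} {a : ℂ} (hG : MDiff G) (hS : G ∣[k] S = G)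
    (hT : G ∣[k] T = G) (hl : Tendsto G atImInfty (𝓝 a)) : Trip k (fun _ => G) a a :=
  ⟨fun _ => hG, hT, hT, hT, hS, hS, hS, hl, hl, hl⟩

lemma E4_smul (γ : SL(2, ℤ)) (τ : ℍ) :
    ModularForm.E₄ (γ • τ) = (denom γ τ) ^ 4 * ModularForm.E₄ τ := by
  have h : ((ModularForm.E₄ : ℍ → ℂ) ∣[(4 : ℤ)] γ) = ModularForm.E₄ :=
    ModularForm.E₄.slash_action_eq' _ ⟨γ, rfl⟩
  have := congrFun h τ
  rw [ModularForm.SL_slash_apply] at this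
  rw [← this]
  have := denom_ne_zero γ τ
  rw [zpow_neg]
  field_simp

lemma E2_smul (γ : SL(2, ℤ)) (τ : ℍ) : EisensteinSeries.E2 (γ • τ) =
    (denom γ τ) ^ 2 * EisensteinSeries.E2 τ - 6 * Complex.I / Real.pi * (γ 1 0) * denom γ τ := by
  have := congrFun (EisensteinSeries.E2_slash_action γ) τ
  rw [ModularForm.SL_slash_apply] at this
  simp only [Pi.sub_apply, Pi.smul_apply, EisensteinSeries.D2, riemannZeta_two, smul_eq_mul] at this
  have hd := denom_ne_zero γ τ
  have hpi : (Real.pi : ℂ) ≠ 0 := by exact_mod_cast Real.pi_ne_zero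
  rw [zpow_neg] at this
  have h2 : EisensteinSeries.E2 (γ • τ) =
    (EisensteinSeries.E2 (γ • τ) * ((denom γ τ) ^ (2 : ℤ))⁻¹) * (denom γ τ) ^ 2 := by
    field_simp
  rw [h2, this]
  field_simp

/-- The triple of `E₄(2τ)`. -/
def f4 : Fin 3 → ℍ → ℂ := ![fun τ => ModularForm.E₄ (dbl τ), fun τ => ModularForm.E₄ (hlf τ) / 16,
  fun τ => ModularForm.E₄ (hlf1 τ) / 16]

/-- The triple of `2 * E₂(2τ) - E₂(τ)`. -/
def xx : Fin 3 → ℍ → ℂ :=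
  ![fun τ => 2 * EisensteinSeries.E2 (dbl τ) - EisensteinSeries.E2 τ,
    fun τ => EisensteinSeries.E2 (hlf τ) / 2 - EisensteinSeries.E2 τ,
    fun τ => EisensteinSeries.E2 (hlf1 τ) / 2 - EisensteinSeries.E2 τ]

lemma E4_T (τ : ℍ) : ModularForm.E₄ (T • τ) = ModularForm.E₄ τ := by
  rw [E4_smul, denom_T']; ring
lemma E2_T (τ : ℍ) : EisensteinSeries.E2 (T • τ) = EisensteinSeries.E2 τ := by
  rw [E2_smul, denom_T']; simp [T]
lemma E4_S (τ : ℍ) : ModularForm.E₄ (S • τ) = τ ^ 4 * ModularForm.E₄ τ := by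
  rw [E4_smul, denom_S']
lemma E2_S (τ : ℍ) : EisensteinSeries.E2 (S • τ) =
    τ ^ 2 * EisensteinSeries.E2 τ - 6 * Complex.I / Real.pi * τ := by
  rw [E2_smul, denom_S']; simp [S]
lemma E2_gam (τ : ℍ) : EisensteinSeries.E2 (gam • τ) =
    (2 * τ - 1) ^ 2 * EisensteinSeries.E2 τ - 6 * Complex.I / Real.pi * 2 * (2 * τ - 1) := by
  rw [E2_smul, denom_gam]; simp [gam]

lemma coe_dbl (τ : ℍ) : (dbl τ : ℂ) = 2 * τ := rfl
lemma coe_hlf (τ : ℍ) : (hlf τ : ℂ) = τ / 2 := rfl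
lemma coe_hlf1 (τ : ℍ) : (hlf1 τ : ℂ) = (τ + 1) / 2 := rfl

lemma trip_f4 (hl : Tendsto ModularForm.E₄ atImInfty (𝓝 1)) : Trip 4 f4 1 (1 / 16) where
  holo i := by
    have h := ModularForm.E₄.holo'
    fin_cases i
    · exact mdiff_comp h dbl (fun z => 2 * z) (by fun_prop) coe_dbl
    · have := (mdiff_comp h hlf (fun z => z / 2) (by fun_prop) coe_hlf).const_smul (16⁻¹ : ℂ)
      convert this using 1; ext τ; simp [f4, div_eq_inv_mul]
    · have := (mdiff_comp h hlf1 (fun z => (z + 1) / 2) (by fun_prop) coe_hlf1).const_smul (16⁻¹ : ℂ)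
      convert this using 1; ext τ; simp [f4, div_eq_inv_mul]
  T0 := by ext τ; rw [slash_T']; simp only [f4, Matrix.cons_val, dbl_T, E4_T]
  T1 := by ext τ; rw [slash_T']; simp only [f4, Matrix.cons_val, hlf_T, E4_T]
  T2 := by ext τ; rw [slash_T']; simp only [f4, Matrix.cons_val, hlf1_T, E4_T]
  S0 := by
    ext τ; rw [slash_S']; simp only [f4, Matrix.cons_val]
    rw [dbl_S, E4_S, coe_hlf]
    have := ne_zero τ
    rw [zpow_neg]; norm_cast; field_simp; ring
  S1 := by
    ext τ; rw [slash_S']; simp only [f4, Matrix.cons_val]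
    rw [hlf_S, E4_S, coe_dbl]
    have := ne_zero τ
    rw [zpow_neg]; norm_cast; push_cast; field_simp; ring
  S2 := by
    ext τ; rw [slash_S']; simp only [f4, Matrix.cons_val]
    rw [hlf1_S, E4_smul, denom_gam, coe_hlf1]
    have := ne_zero τ
    have h2 : 2 * (((τ : ℂ) + 1) / 2) - 1 = τ := by ring
    rw [h2, zpow_neg]; norm_cast; field_simp
  l0 := hl.comp tendsto_dbl
  l1 := (hl.comp tendsto_hlf).div_const 16
  l2 := (hl.comp tendsto_hlf1).div_const 16

lemma trip_xx (hl : Tendsto EisensteinSeries.E2 atImInfty (𝓝 1)) : Trip 2 xx 1 (-1 / 2) where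
  holo i := by
    have h := E2_mdifferentiable
    fin_cases i
    · exact ((mdiff_comp h dbl (fun z => 2 * z) (by fun_prop) coe_dbl).const_smul (2 : ℂ)).sub h
    · have := ((mdiff_comp h hlf (fun z => z / 2) (by fun_prop) coe_hlf).const_smul (2⁻¹ : ℂ)).sub h
      convert this using 1; ext τ; simp [xx, div_eq_inv_mul]
    · have := ((mdiff_comp h hlf1 (fun z => (z + 1) / 2) (by fun_prop) coe_hlf1).const_smul (2⁻¹ : ℂ)).sub h
      convert this using 1; ext τ; simp [xx, div_eq_inv_mul]
  T0 := by ext τ; rw [slash_T']; simp only [xx, Matrix.cons_val, dbl_T, E2_T]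
  T1 := by ext τ; rw [slash_T']; simp only [xx, Matrix.cons_val, hlf_T, E2_T]
  T2 := by ext τ; rw [slash_T']; simp only [xx, Matrix.cons_val, hlf1_T, E2_T]
  S0 := by
    ext τ; rw [slash_S']; simp only [xx, Matrix.cons_val]
    rw [dbl_S, E2_S, E2_S, coe_hlf]
    have := ne_zero τ
    rw [zpow_neg]; norm_cast; field_simp; ring
  S1 := by
    ext τ; rw [slash_S']; simp only [xx, Matrix.cons_val]
    rw [hlf_S, E2_S, E2_S, coe_dbl]
    have := ne_zero τ
    rw [zpow_neg]; norm_cast; push_cast; field_simp; ring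
  S2 := by
    ext τ; rw [slash_S']; simp only [xx, Matrix.cons_val]
    rw [hlf1_S, E2_gam, E2_S, coe_hlf1]
    have := ne_zero τ
    have h2 : 2 * (((τ : ℂ) + 1) / 2) - 1 = τ := by ring
    rw [h2, zpow_neg]; norm_cast; field_simp; ring
  l0 := by
    have := ((hl.comp tendsto_dbl).const_mul 2).sub hl
    norm_num at this
    exact this
  l1 := by
    have := ((hl.comp tendsto_hlf).div_const 2).sub hl
    rw [show (1 / 2 - 1 : ℂ) = -1 / 2 by norm_num] at this
    exact this
  l2 := by
    have := ((hl.comp tendsto_hlf1).div_const 2).sub hl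
    rw [show (1 / 2 - 1 : ℂ) = -1 / 2 by norm_num] at this
    exact this

lemma trip_e4 (hl : Tendsto ModularForm.E₄ atImInfty (𝓝 1)) :
    Trip 4 (fun _ => ModularForm.E₄) 1 1 :=
  trip_const ModularForm.E₄.holo' (ModularForm.E₄.slash_action_eq' _ ⟨S, rfl⟩)
    (ModularForm.E₄.slash_action_eq' _ ⟨T, rfl⟩) hl

/-- The Ramanujan identity for `E₂`. -/
lemma ramanujan_E2 (hl : Tendsto EisensteinSeries.E2 atImInfty (𝓝 1))
    (hl4 : Tendsto ModularForm.E₄ atImInfty (𝓝 1)) (τ : ℍ) :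
    D EisensteinSeries.E2 τ = (EisensteinSeries.E2 τ ^ 2 - ModularForm.E₄ τ) / 12 := by
  set E := EisensteinSeries.E2 with hE
  have hm : MDiff (D E) := normalizedDerivOfComplex_mdifferentiable E2_mdifferentiable
  set Z : ℍ → ℂ := D E - (12⁻¹ : ℂ) • (E * E) with hZ
  have hZm : MDiff Z := hm.sub ((E2_mdifferentiable.mul E2_mdifferentiable).const_smul _)
  have hsT : Z ∣[(4 : ℤ)] T = Z := by
    have h1 := normalizedDerivOfComplex_SL_slash (k := 2) E2_mdifferentiable (γ := T)
    rw [EisensteinSeries.E2_slash_action, EisensteinSeries.D2_T, smul_zero, sub_zero] at h1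
    ext w
    have h2 := congrFun h1 w
    rw [Pi.sub_apply, show (2 + 2 : ℤ) = 4 by norm_num, slash_T'] at h2
    simp only [T, Matrix.of_apply, Matrix.SpecialLinearGroup.coe_mk, Matrix.cons_val,
      Int.cast_zero, zero_div, mul_zero, zero_mul, sub_zero] at h2
    rw [slash_T']
    simp only [hZ, Pi.sub_apply, Pi.smul_apply, Pi.mul_apply]
    rw [hE, E2_T, h2]; rfl
  have hsS : Z ∣[(4 : ℤ)] S = Z := by
    have h1 := normalizedDerivOfComplex_SL_slash (k := 2) E2_mdifferentiable (γ := S)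
    rw [EisensteinSeries.E2_slash_action] at h1
    have hpi : (Real.pi : ℂ) ≠ 0 := by exact_mod_cast Real.pi_ne_zero
    have hI := Complex.I_ne_zero
    have hc : ((1 : ℂ) / (2 * riemannZeta 2)) • EisensteinSeries.D2 S =
        (6 * Complex.I / Real.pi) • fun w : ℍ => (w : ℂ)⁻¹ := by
      ext w
      simp only [Pi.smul_apply, EisensteinSeries.D2_S, riemannZeta_two, smul_eq_mul]
      field_simp
    rw [hc] at h1
    have hinv : MDiff (fun w : ℍ => (w : ℂ)⁻¹) := by
      rw [UpperHalfPlane.mdifferentiable_iff]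
      refine DifferentiableOn.congr (f := fun v : ℂ => v⁻¹) ?_ ?_
      · intro v hv
        refine (differentiableAt_inv ?_).differentiableWithinAt
        rintro rfl
        simp [upperHalfPlaneSet] at hv
      · intro v hv
        simp [ofComplex_apply_of_im_pos hv]
    have hD : ∀ w : ℍ, D (fun w : ℍ => (w : ℂ)⁻¹) w =
        -(2 * Real.pi * Complex.I)⁻¹ * ((w : ℂ) ^ 2)⁻¹ := by
      intro w
      have : deriv ((fun w : ℍ => (w : ℂ)⁻¹) ∘ ofComplex) w = -((w : ℂ) ^ 2)⁻¹ := by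
        rw [← deriv_inv]
        refine Filter.EventuallyEq.deriv_eq ?_
        filter_upwards [isOpen_upperHalfPlaneSet.mem_nhds w.im_pos] with v hv
        simp [ofComplex_apply_of_im_pos hv]
      rw [normalizedDerivOfComplex, this]
      ring
    ext w
    have h2 := congrFun h1 w
    rw [normalizedDerivOfComplex_sub _ _ E2_mdifferentiable (hinv.const_smul _),
      normalizedDerivOfComplex_smul _ _ hinv] at h2
    have hw := ne_zero w
    simp only [Pi.sub_apply, Pi.smul_apply, smul_eq_mul, hD, denom_S'] at h2
    rw [show (2 + 2 : ℤ) = 4 by norm_num, slash_S'] at h2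
    have hS10 : S 1 0 = 1 := rfl
    rw [hS10] at h2
    rw [slash_S']
    simp only [hZ, Pi.sub_apply, Pi.smul_apply, Pi.mul_apply, smul_eq_mul, sub_mul]
    rw [hE, E2_S]
    have hz : (w : ℂ) ^ (-4 : ℤ) = ((w : ℂ) ^ 4)⁻¹ := by rw [zpow_neg]; norm_cast
    have hp : (2 * (Real.pi : ℂ) * Complex.I)⁻¹ = -Complex.I / (2 * Real.pi) := by
      rw [mul_inv, Complex.inv_I]; field_simp
    rw [hp, hz] at h2
    rw [hz]
    generalize D EisensteinSeries.E2 (S • w) = A at *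
    generalize D EisensteinSeries.E2 w = B at *
    generalize EisensteinSeries.E2 w = C at *
    have h3 := sub_eq_iff_eq_add.mp h2.symm
    rw [h3]
    push_cast
    field_simp
    ring_nf
  have hZl : Tendsto Z atImInfty (𝓝 (-1 / 12)) := by
    have := (tendsto_D E2_mdifferentiable hl).sub ((hl.mul hl).const_mul (12⁻¹ : ℂ))
    rw [show (0 - 12⁻¹ * (1 * 1) : ℂ) = -1 / 12 by norm_num] at this
    exact this
  have hz := trip_const hZm hsS hsT hZl
  have h := hz.add ((trip_e4 hl4).smul (1 / 12))
  rw [show (-1 / 12 + 1 / 12 * 1 : ℂ) = 0 by norm_num] at h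
  have := Trip.vanish (trip_xx hl) h (by norm_num) τ
  simp [hZ] at this
  linear_combination this

lemma tendsto_of_hasSum {f : ℍ → ℂ} {c : ℕ → ℂ}
    (hf : ∀ τ : ℍ, HasSum (fun m ↦ c m • Function.Periodic.qParam 1 τ ^ m) (f τ)) :
    Tendsto f atImInfty (𝓝 (c 0)) := by
  have hq0 : ∀ τ : ℍ, Function.Periodic.qParam 1 τ ≠ 0 := fun τ => Complex.exp_ne_zero _
  have hg : ∀ τ : ℍ, HasSum (fun m ↦ c (m + 1) • Function.Periodic.qParam 1 τ ^ m)
      ((f τ - c 0) * (Function.Periodic.qParam 1 τ)⁻¹) := by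
    intro τ
    have h1 := (hasSum_nat_add_iff' 1).mpr (hf τ)
    simp only [Finset.range_one, Finset.sum_singleton, pow_zero, smul_eq_mul, mul_one] at h1
    have h2 := h1.mul_right (Function.Periodic.qParam 1 τ)⁻¹
    refine h2.congr_fun ?_
    intro m
    have := hq0 τ
    rw [smul_eq_mul, pow_succ]
    field_simp
  have hb := isBoundedAtImInfty_of_hasSum_qExpansion one_pos hg
  have hb2 : (fun τ : ℍ => (f τ - c 0) * (Function.Periodic.qParam 1 τ)⁻¹) =O[atImInfty]
    (1 : ℍ → ℝ) := hb
  have h0 := hb2.mul (Asymptotics.isBigO_refl (fun τ : ℍ => Function.Periodic.qParam 1 τ) atImInfty).norm_right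
  have h1 : Tendsto (fun τ : ℍ => (1 : ℍ → ℝ) τ * ‖Function.Periodic.qParam 1 τ‖) atImInfty (𝓝 0) := by
    simpa using (qParam_tendsto_atImInfty one_pos).norm
  have h2 := (h0.trans_tendsto h1).add_const (c 0)
  rw [zero_add] at h2
  refine h2.congr fun τ => ?_
  have := hq0 τ
  field_simp
  ring

lemma lim_E2 : Tendsto EisensteinSeries.E2 atImInfty (𝓝 1) := by
  have := tendsto_of_hasSum (f := EisensteinSeries.E2) fun τ => by
    simpa only [Function.Periodic.qParam, ofReal_one, div_one] using EisensteinSeries.hasSum_qExpansion_E2 (z := τ)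
  simpa using this

lemma lim_E4 : Tendsto ModularForm.E₄ atImInfty (𝓝 1) := by
  have := tendsto_of_hasSum (f := ModularForm.E₄)
    fun τ => ModularForm.hasSum_qExpansion ModularForm.E₄ one_pos one_mem_strictPeriods_SL τ
  have h2 := EisensteinSeries.E_qExpansion_coeff_zero (k := 4) (by norm_num) (by decide)
  rw [← h2]
  exact this

lemma Trip.cast0 {k : ℤ} {y : Fin 3 → ℍ → ℂ} {a b : ℂ} (h : Trip k y a b) (ha : a = 0)
    (hb : b = 0) : Trip k y 0 0 := by subst ha hb; exact h

/-- The triple of `𝒬`. -/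
def qt : Fin 3 → ℍ → ℂ := (16 / 15 : ℂ) • f4 + (-1 / 15 : ℂ) • (fun _ => ⇑ModularForm.E₄)
/-- The triple of `𝒟`. -/
def dt : Fin 3 → ℍ → ℂ := (1 / 64 : ℂ) • (xx * xx + (-1 : ℂ) • qt)

lemma trip_qt : Trip 4 qt (16 / 15 * 1 + -1 / 15 * 1) (16 / 15 * (1 / 16) + -1 / 15 * 1) :=
  ((trip_f4 lim_E4).smul _).add ((trip_e4 lim_E4).smul _)

lemma trip_dt : Trip 4 dt (1 / 64 * (1 * 1 + -1 * (16 / 15 * 1 + -1 / 15 * 1)))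
    (1 / 64 * (-1 / 2 * (-1 / 2) + -1 * (16 / 15 * (1 / 16) + -1 / 15 * 1))) :=
  (((trip_xx lim_E2).mul (trip_xx lim_E2)).add (trip_qt.smul (-1))).smul (1 / 64)

lemma D_e (τ : ℍ) :
    D EisensteinSeries.E2 τ = (EisensteinSeries.E2 τ ^ 2 - ModularForm.E₄ τ) / 12 :=
  ramanujan_E2 lim_E2 lim_E4 τ

lemma D_x (τ : ℍ) : 24 * D (xx 0) τ = 4 * EisensteinSeries.E2 τ * xx 0 τ + 4 * xx 0 τ ^ 2 +
    ModularForm.E₄ τ - 9 * qt 0 τ := by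
  have hx := trip_xx lim_E2
  have h : Trip 4 _ _ _ := ((((hx.serre lim_E2).smul 24).add ((hx.mul hx).smul (-4))).add
    ((trip_e4 lim_E4).smul (-1))).add (trip_qt.smul 9)
  have := Trip.vanish hx (h.cast0 (by norm_num) (by norm_num)) (by norm_num) τ
  simp only [Pi.add_apply, Pi.smul_apply, Pi.mul_apply, smul_eq_mul, serreDerivative_apply] at this
  push_cast at this
  linear_combination this

lemma D_q (τ : ℍ) : 3 * D (qt 0) τ = qt 0 τ * (EisensteinSeries.E2 τ - xx 0 τ) := by
  have hx := trip_xx lim_E2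
  have h : Trip 6 _ _ _ := ((trip_qt.serre lim_E2).smul 3).add ((trip_qt.mul hx).smul 1)
  have := Trip.vanish hx (h.cast0 (by norm_num) (by norm_num)) (by norm_num) τ
  simp only [Pi.add_apply, Pi.smul_apply, Pi.mul_apply, smul_eq_mul, serreDerivative_apply] at this
  push_cast at this
  linear_combination this

lemma D_d (τ : ℍ) : 3 * D (dt 0) τ = dt 0 τ * (EisensteinSeries.E2 τ + 2 * xx 0 τ) := by
  have hx := trip_xx lim_E2
  have h : Trip 6 _ _ _ := ((trip_dt.serre lim_E2).smul 3).add ((trip_dt.mul hx).smul (-2))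
  have := Trip.vanish hx (h.cast0 (by norm_num) (by norm_num)) (by norm_num) τ
  simp only [Pi.add_apply, Pi.smul_apply, Pi.mul_apply, smul_eq_mul, serreDerivative_apply] at this
  push_cast at this
  linear_combination this

/-- The quasimodular form `P`. -/
def PP : ℍ → ℂ := (1 / 3 : ℂ) • ((2 : ℂ) • xx 0 + EisensteinSeries.E2)

lemma mx : MDiff (xx 0) := (trip_xx lim_E2).holo 0
lemma mq : MDiff (qt 0) := trip_qt.holo 0
lemma md : MDiff (dt 0) := trip_dt.holo 0
lemma mP : MDiff PP := ((mx.const_smul _).add E2_mdifferentiable).const_smul _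

lemma D_P : D PP = (1 / 4 : ℂ) • (PP * PP - qt 0) := by
  rw [PP, normalizedDerivOfComplex_smul _ _ ((mx.const_smul _).add E2_mdifferentiable),
    normalizedDerivOfComplex_add _ _ (mx.const_smul _) E2_mdifferentiable,
    normalizedDerivOfComplex_smul _ _ mx]
  ext τ
  simp only [Pi.add_apply, Pi.sub_apply, Pi.smul_apply, Pi.mul_apply, smul_eq_mul]
  linear_combination (1 / 36) * D_x τ + (1 / 3) * D_e τ

lemma D_d1 : D (dt 0) = PP * dt 0 := by
  ext τ
  simp only [PP, Pi.add_apply, Pi.smul_apply, Pi.mul_apply, smul_eq_mul]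
  linear_combination (1 / 3) * D_d τ

lemma D_q1 : D (qt 0) = qt 0 * (PP - xx 0) := by
  ext τ
  simp only [PP, Pi.add_apply, Pi.sub_apply, Pi.smul_apply, Pi.mul_apply, smul_eq_mul]
  linear_combination (1 / 3) * D_q τ

lemma D_d2 : D (D (dt 0)) = (1 / 4 : ℂ) • (((5 : ℂ) • (PP * PP) - qt 0) * dt 0) := by
  rw [D_d1, normalizedDerivOfComplex_mul _ _ mP md, D_P, D_d1]
  ext τ
  simp only [Pi.add_apply, Pi.sub_apply, Pi.smul_apply, Pi.mul_apply, smul_eq_mul]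
  ring

lemma D_d3 (τ : ℍ) : D (D (D (dt 0))) τ = dt 0 τ * (PP τ * (5 * PP τ ^ 2 - qt 0 τ) / 4 +
    (10 * PP τ * (PP τ ^ 2 - qt 0 τ) / 4 - qt 0 τ * (PP τ - xx 0 τ)) / 4) := by
  have h1 : MDiff ((5 : ℂ) • (PP * PP)) := (mP.mul mP).const_smul _
  have h2 : MDiff ((5 : ℂ) • (PP * PP) - qt 0) := h1.sub mq
  rw [D_d2, normalizedDerivOfComplex_smul _ _ (h2.mul md), normalizedDerivOfComplex_mul _ _ h2 md,
    normalizedDerivOfComplex_sub _ _ h1 mq, normalizedDerivOfComplex_smul _ _ (mP.mul mP),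
    normalizedDerivOfComplex_mul _ _ mP mP, D_P, D_d1, D_q1]
  simp only [Pi.add_apply, Pi.sub_apply, Pi.smul_apply, Pi.mul_apply, smul_eq_mul]
  ring

lemma lambert (k : ℕ) {r : ℂ} (hr : ‖r‖ < 1) :
    ∑' n : ℕ+, (ArithmeticFunction.sigma k n : ℂ) * r ^ (n : ℕ) =
      ∑' n : ℕ, ((n : ℂ) + 1) ^ k * r ^ (n + 1) / (1 - r ^ (n + 1)) := by
  rw [← tsum_pow_div_one_sub_eq_tsum_sigma hr k,
    tsum_pnat_eq_tsum_succ (f := fun n : ℕ => (n : ℂ) ^ k * r ^ n / (1 - r ^ n))]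
  push_cast
  rfl

lemma lambert_summable (k : ℕ) {r : ℂ} (hr : ‖r‖ < 1) :
    Summable fun n : ℕ => ((n : ℂ) + 1) ^ k * r ^ (n + 1) / (1 - r ^ (n + 1)) := by
  have h0 := summable_norm_pow_mul_geometric_div_one_sub k hr
  have h1 := (summable_nat_add_iff (f := fun n : ℕ => (n : ℂ) ^ k * r ^ n / (1 - r ^ n)) 1).mpr h0
  simpa only [Nat.cast_add, Nat.cast_one] using h1

lemma qq_dbl (z : ℍ) : qq (dbl z) = qq z ^ 2 := by
  rw [qq, qq, ← Complex.exp_nat_mul, coe_dbl]; congr 1; push_cast; ring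

lemma qq_lt (z : ℍ) : ‖qq z‖ < 1 := norm_exp_two_pi_I_lt_one z

lemma E2_eq (z : ℍ) : EisensteinSeries.E2 z =
    1 - 24 * ∑' n : ℕ, ((n : ℂ) + 1) ^ 1 * qq z ^ (n + 1) / (1 - qq z ^ (n + 1)) := by
  rw [EisensteinSeries.E2_eq_tsum_cexp, ← lambert 1 (qq_lt z)]; rfl

lemma E4_eq (z : ℍ) : ModularForm.E₄ z =
    1 + 240 * ∑' n : ℕ, ((n : ℂ) + 1) ^ 3 * qq z ^ (n + 1) / (1 - qq z ^ (n + 1)) := by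
  have := EisensteinSeries.q_expansion_bernoulli (k := 4) (by norm_num) (by decide) z
  rw [bernoulli_eq_bernoulli'_of_ne_one (by norm_num), bernoulli'_four] at this
  refine this.trans ?_
  rw [← lambert 3 (qq_lt z)]
  simp only [zpow_natCast, qq]
  norm_num

lemma pow_ne {r : ℂ} (hr : ‖r‖ < 1) (n : ℕ) : r ^ (n + 1) ≠ 1 ∧ r ^ (n + 1) ≠ -1 := by
  have h : ‖r ^ (n + 1)‖ < 1 := by
    rw [norm_pow]; exact pow_lt_one₀ (norm_nonneg _) hr (by simp)
  constructor <;> intro h1 <;> rw [h1] at h <;> simp at h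

lemma EPt_eq (z : ℍ) : EPt z = xx 0 z := by
  have h1 := lambert_summable 1 (qq_lt z)
  have hq2 : ‖qq z ^ 2‖ < 1 := by rw [← qq_dbl]; exact qq_lt _
  have h2 := lambert_summable 1 hq2
  have h3 := h1.hasSum.sub (h2.hasSum.mul_left 2)
  simp only [xx, Matrix.cons_val]
  rw [E2_eq, E2_eq, qq_dbl, EPt]
  have : ∑' n : ℕ, ((n : ℂ) + 1) * qq z ^ (n + 1) / (1 + qq z ^ (n + 1)) =
      (∑' n : ℕ, ((n : ℂ) + 1) ^ 1 * qq z ^ (n + 1) / (1 - qq z ^ (n + 1))) -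
      2 * ∑' n : ℕ, ((n : ℂ) + 1) ^ 1 * (qq z ^ 2) ^ (n + 1) / (1 - (qq z ^ 2) ^ (n + 1)) := by
    refine Eq.trans (tsum_congr fun n => ?_) h3.tsum_eq
    obtain ⟨ha, hb⟩ := pow_ne (qq_lt z) n
    rw [pow_right_comm]
    generalize qq z ^ (n + 1) = u at *
    have ha' : 1 - u ≠ 0 := sub_ne_zero.mpr ha.symm
    have hb' : 1 + u ≠ 0 := fun h => hb (by linear_combination h)
    have hc : 1 - u ^ 2 ≠ 0 := by
      rw [show 1 - u ^ 2 = (1 - u) * (1 + u) by ring]; exact mul_ne_zero ha' hb'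
    rw [show 1 - u ^ 2 = (1 - u) * (1 + u) by ring]
    field_simp
    ring
  rw [this]
  ring

lemma EQ_eq (z : ℍ) : EQ z = qt 0 z := by
  have h1 := lambert_summable 3 (qq_lt z)
  have hq2 : ‖qq z ^ 2‖ < 1 := by rw [← qq_dbl]; exact qq_lt _
  simp only [qt, f4, Pi.add_apply, Pi.smul_apply, smul_eq_mul, Matrix.cons_val]
  rw [E4_eq, E4_eq, qq_dbl, EQ]
  set a : ℕ → ℂ := fun n => ((n : ℂ) + 1) ^ 3 * qq z ^ (n + 1) / (1 - qq z ^ (n + 1)) with ha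
  have hA : Summable fun k => a (2 * k) :=
    h1.comp_injective (mul_right_injective₀ (two_ne_zero))
  have hB : Summable fun k => a (2 * k + 1) :=
    h1.comp_injective (i := fun k => 2 * k + 1) (fun x y h => by simpa using h)
  have e1 := HasSum.even_add_odd hA.hasSum hB.hasSum
  have e2 : HasSum (fun n : ℕ => (-1 : ℂ) ^ (n + 1) * ((n : ℂ) + 1) ^ 3 * qq z ^ (n + 1) /
      (1 - qq z ^ (n + 1))) (-(∑' k, a (2 * k)) + ∑' k, a (2 * k + 1)) := by
    refine HasSum.even_add_odd (hA.hasSum.neg.congr_fun ?_) (hB.hasSum.congr_fun ?_)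
    · intro k
      simp only [ha, pow_succ (-1 : ℂ), pow_mul]; norm_num; ring
    · intro k
      simp only [ha, pow_succ (-1 : ℂ), pow_mul]; norm_num
  have e3 : ∑' k, a (2 * k + 1) = 8 * ∑' n : ℕ, ((n : ℂ) + 1) ^ 3 * (qq z ^ 2) ^ (n + 1) /
      (1 - (qq z ^ 2) ^ (n + 1)) := by
    rw [← tsum_mul_left]
    refine tsum_congr fun n => ?_
    simp only [ha]
    rw [← pow_mul, show 2 * n + 1 + 1 = 2 * (n + 1) by ring]
    push_cast
    ring
  rw [e2.tsum_eq, e1.tsum_eq]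
  linear_combination 32 * e3

lemma ED_eq (z : ℍ) : ED z = dt 0 z := by
  simp only [ED, EPt_eq, EQ_eq, dt, Pi.add_apply, Pi.smul_apply, Pi.mul_apply, smul_eq_mul]
  ring

lemma nderiv_eq {G : ℂ → ℂ} {F : ℍ → ℂ} (h : ∀ z : ℍ, G z = F z) (z : ℍ) :
    nderiv G z = D F z := by
  rw [nderiv, normalizedDerivOfComplex]
  congr 1
  refine Filter.EventuallyEq.deriv_eq ?_
  filter_upwards [isOpen_upperHalfPlaneSet.mem_nhds z.im_pos] with v hv
  rw [Function.comp_apply, ofComplex_apply_of_im_pos hv]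
  exact h ⟨v, hv⟩

end

/-- The weight-four modular form `𝒟` on `Γ₀(2)` satisfies a third-order nonlinear ODE. -/
theorem ED_third_order_ODE :
    ∀ τ : ℂ, 0 < τ.im →
      4 * ED τ ^ 4 * (nderiv (nderiv (nderiv ED)) τ) ^ 2 -
      6 * ED τ ^ 2 * nderiv ED τ * (6 * ED τ * nderiv (nderiv ED) τ - 5 * (nderiv ED τ) ^ 2) *
        nderiv (nderiv (nderiv ED)) τ +
      16 * ED τ ^ 3 * (nderiv (nderiv ED) τ) ^ 3 -
      ED τ ^ 2 * (256 * ED τ ^ 3 - 21 * (nderiv ED τ) ^ 2) * (nderiv (nderiv ED) τ) ^ 2 +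
      20 * ED τ * (nderiv ED τ) ^ 2 * (32 * ED τ ^ 3 - 3 * (nderiv ED τ) ^ 2) *
        nderiv (nderiv ED) τ +
      25 * (nderiv ED τ) ^ 6 - 400 * ED τ ^ 3 * (nderiv ED τ) ^ 4 = 0 := by

  intro τ hτ
  have h1 := nderiv_eq ED_eq
  have h2 := nderiv_eq h1
  have h3 := nderiv_eq h2
  have e0 := ED_eq ⟨τ, hτ⟩
  have e1 := h1 ⟨τ, hτ⟩
  have e2 := h2 ⟨τ, hτ⟩
  have e3 := h3 ⟨τ, hτ⟩
  rw [D_d3] at e3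
  rw [D_d2] at e2
  rw [D_d1] at e1
  have ed : dt 0 ⟨τ, hτ⟩ = (xx 0 ⟨τ, hτ⟩ ^ 2 - qt 0 ⟨τ, hτ⟩) / 64 := by
    simp only [dt, Pi.add_apply, Pi.smul_apply, Pi.mul_apply, smul_eq_mul]
    ring
  simp only [Pi.sub_apply, Pi.smul_apply, Pi.mul_apply, smul_eq_mul] at e1 e2
  rw [e3, e2, e1, e0, ed]
  generalize xx 0 ⟨τ, hτ⟩ = x
  generalize qt 0 ⟨τ, hτ⟩ = q
  generalize PP ⟨τ, hτ⟩ = p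
  ring
end
end

section
/- The weight-one level-three Eisenstein series f = E_{1,3} satisfies the third-order nonlinear ODE: for every τ ∈ ℍ, f²(f''')² − 6f'(3ff'' − 4(f')²)f''' + 18f(f'')³ − (f⁶ + 27(f')²)(f'')² + 4f⁵(f')²f'' − 4f⁴(f')⁴ = 0. -/
open Complex

noncomputable section

/-- The weight-one level-three Eisenstein series
`E_{1,3}(τ) = Σ_{(α,β)∈ℤ²} q^{α²−αβ+β²}`. -/
def E13 : ℂ → ℂ := fun τ => ∑' p : ℤ × ℤ, qq τ ^ (p.1 ^ 2 - p.1 * p.2 + p.2 ^ 2)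


lemma hasSum_congr_fun {u v : ℤ × ℤ → ℂ} {s : ℂ} (h : HasSum v s) (e : ∀ p, u p = v p) :
    HasSum u s := by
  rw [show u = v from funext e]; exact h

lemma hasSum_split {e1 e2 : ℤ × ℤ → ℤ × ℤ} (hb : Function.Bijective (Sum.elim e1 e2))
    {g : ℤ × ℤ → ℂ} {s t : ℂ} (h1 : HasSum (fun p => g (e1 p)) s)
    (h2 : HasSum (fun p => g (e2 p)) t) : HasSum g (s + t) := by
  rw [← (Equiv.ofBijective _ hb).hasSum_iff]
  exact HasSum.sum (f := g ∘ (Equiv.ofBijective _ hb)) h1 h2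

lemma hasSum_prod {u v : ℤ → ℂ} {s t : ℂ} (h1 : HasSum u s) (h2 : HasSum v t) :
    HasSum (fun p : ℤ × ℤ => u p.1 * v p.2) (s * t) := by
  have := summable_mul_of_summable_norm h1.summable.norm h2.summable.norm
  rw [← h1.tsum_eq, ← h2.tsum_eq,
    tsum_mul_tsum_of_summable_norm h1.summable.norm h2.summable.norm]
  exact this.hasSum

lemma qq_zpow (τ : ℂ) (n : ℤ) : qq τ ^ n = cexp (2 * Real.pi * I * τ * n) := by
  rw [qq, ← Complex.exp_int_mul]; congr 1; ring

lemma E13_hasSum (τ : ℂ) (hτ : 0 < τ.im) :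
    HasSum (fun p : ℤ × ℤ => qq τ ^ (p.1 ^ 2 - p.1 * p.2 + p.2 ^ 2))
      (jacobiTheta₂ 0 (2 * τ) * jacobiTheta₂ 0 (6 * τ) +
        (cexp (Real.pi * I * τ / 2) * jacobiTheta₂ τ (2 * τ)) *
        (cexp (3 * Real.pi * I * τ / 2) * jacobiTheta₂ (3 * τ) (6 * τ))) := by
  have h2 : 0 < (2 * τ).im := by simpa using hτ
  have h6 : 0 < (6 * τ).im := by simpa using hτ
  refine hasSum_split (e1 := fun p => (p.1 + p.2, 2 * p.2))
    (e2 := fun p => (p.1 + p.2 + 1, 2 * p.2 + 1)) ?_ ?_ ?_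
  · constructor
    · rintro (⟨a, b⟩ | ⟨a, b⟩) (⟨c, d⟩ | ⟨c, d⟩) h <;> simp at h ⊢ <;> omega
    · rintro ⟨a, b⟩
      rcases Int.even_or_odd' b with ⟨k, rfl | rfl⟩
      · exact ⟨Sum.inl (a - k, k), by simp⟩
      · exact ⟨Sum.inr (a - k - 1, k), by simp; try ring⟩
  · convert hasSum_prod (hasSum_jacobiTheta₂_term 0 h2) (hasSum_jacobiTheta₂_term 0 h6) using 2 with p
    rw [qq_zpow, jacobiTheta₂_term, jacobiTheta₂_term, ← Complex.exp_add]
    congr 1; push_cast; ring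
  · convert hasSum_prod ((hasSum_jacobiTheta₂_term τ h2).mul_left (cexp (Real.pi * I * τ / 2)))
      ((hasSum_jacobiTheta₂_term (3 * τ) h6).mul_left (cexp (3 * Real.pi * I * τ / 2))) using 2 with p
    rw [qq_zpow, jacobiTheta₂_term, jacobiTheta₂_term, ← Complex.exp_add, ← Complex.exp_add,
      ← Complex.exp_add]
    congr 1; push_cast; ring

lemma E13_eq (τ : ℂ) (hτ : 0 < τ.im) : E13 τ =
      (jacobiTheta₂ 0 (2 * τ) * jacobiTheta₂ 0 (6 * τ) +
        (cexp (Real.pi * I * τ / 2) * jacobiTheta₂ τ (2 * τ)) *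
        (cexp (3 * Real.pi * I * τ / 2) * jacobiTheta₂ (3 * τ) (6 * τ))) :=
  (E13_hasSum τ hτ).tsum_eq

lemma E13_eq2 (τ : ℂ) (hτ : 0 < τ.im) :
    jacobiTheta₂ 0 (τ / 2) * jacobiTheta₂ 0 (3 * τ / 2) +
    jacobiTheta₂ (1 / 2) (τ / 2) * jacobiTheta₂ (1 / 2) (3 * τ / 2) = 2 * E13 τ := by
  have h2 : 0 < (τ / 2).im := by simpa using hτ
  have h6 : 0 < (3 * τ / 2).im := by simpa using hτ
  have A := (hasSum_prod (hasSum_jacobiTheta₂_term 0 h2) (hasSum_jacobiTheta₂_term 0 h6)).add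
    (hasSum_prod (hasSum_jacobiTheta₂_term (1 / 2) h2) (hasSum_jacobiTheta₂_term (1 / 2) h6))
  have key : ∀ n m : ℤ, jacobiTheta₂_term n 0 (τ / 2) * jacobiTheta₂_term m 0 (3 * τ / 2) +
      jacobiTheta₂_term n (1 / 2) (τ / 2) * jacobiTheta₂_term m (1 / 2) (3 * τ / 2) =
      (1 + cexp ((n + m : ℤ) * (Real.pi * I))) *
        cexp (Real.pi * I * (n ^ 2 + 3 * m ^ 2) * τ / 2) := by
    intro n m
    simp only [jacobiTheta₂_term, ← Complex.exp_add, add_mul, one_mul]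
    congr 2 <;> push_cast <;> ring
  have E := (E13_hasSum τ hτ)
  rw [← E13_eq τ hτ] at E
  refine A.unique ?_
  have := hasSum_split (g := fun p : ℤ × ℤ => jacobiTheta₂_term p.1 0 (τ / 2) * jacobiTheta₂_term p.2 0 (3 * τ / 2) +
      jacobiTheta₂_term p.1 (1 / 2) (τ / 2) * jacobiTheta₂_term p.2 (1 / 2) (3 * τ / 2))
    (e1 := fun p => (2 * p.1 - p.2, p.2))
    (e2 := fun p => (2 * p.1 - p.2 + 1, p.2)) (s := 2 * E13 τ) (t := 0) ?_ ?_ ?_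
  · simpa using this
  · constructor
    · rintro (⟨a, b⟩ | ⟨a, b⟩) (⟨c, d⟩ | ⟨c, d⟩) h <;> simp at h ⊢ <;> omega
    · rintro ⟨a, b⟩
      rcases Int.even_or_odd' (a + b) with ⟨k, h | h⟩
      · exact ⟨Sum.inl (k, b), by simp; omega⟩
      · exact ⟨Sum.inr (k, b), by simp; omega⟩
  · refine hasSum_congr_fun (E.mul_left 2) fun p => ?_
    rw [key, qq_zpow]
    have : cexp ((2 * p.1 - p.2 + p.2 : ℤ) * (Real.pi * I)) = 1 := by
      rw [Complex.exp_eq_one_iff]; exact ⟨p.1, by push_cast; ring⟩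
    rw [this]
    congr 1
    · norm_num
    · congr 1; push_cast; ring
  · refine hasSum_congr_fun hasSum_zero fun p => ?_
    rw [key]
    have : cexp ((2 * p.1 - p.2 + 1 + p.2 : ℤ) * (Real.pi * I)) = -1 := by
      rw [← Complex.exp_pi_mul_I, Complex.exp_eq_exp_iff_exists_int]
      exact ⟨p.1, by push_cast; ring⟩
    rw [this]; simp

/-- The Fricke constant. -/
def kap : ℂ := (Real.sqrt 3 : ℂ) * (-I)

lemma kap_sq : kap ^ 2 = -3 := by
  have : ((Real.sqrt 3 : ℝ) : ℂ) ^ 2 = 3 := by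
    rw [← Complex.ofReal_pow, Real.sq_sqrt (by norm_num)]; norm_num
  rw [kap, mul_pow, this]; simp

lemma im_fricke (τ : ℂ) : (-1 / (3 * τ)).im = τ.im / (3 * normSq τ) := by
  rw [show -1 / (3 * τ) = ((-(1/3) : ℝ) : ℂ) * τ⁻¹ by push_cast; field_simp]
  rw [Complex.im_ofReal_mul, Complex.inv_im]
  by_cases h : normSq τ = 0
  · simp [h]
  · field_simp

lemma im_fricke_pos (τ : ℂ) (hτ : 0 < τ.im) : 0 < (-1 / (3 * τ)).im := by
  rw [im_fricke]
  have : 0 < normSq τ := Complex.normSq_pos.2 (by rintro rfl; simp at hτ)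
  positivity

lemma E13_fricke (τ : ℂ) (hτ : 0 < τ.im) : E13 (-1 / (3 * τ)) = kap * τ * E13 τ := by
  have h0 : τ ≠ 0 := by rintro rfl; simp at hτ
  have e2 := E13_eq2 τ hτ
  rw [E13_eq _ (im_fricke_pos τ hτ)]
  rw [jacobiTheta₂_functional_equation 0 (τ / 2), jacobiTheta₂_functional_equation 0 (3 * τ / 2),
    jacobiTheta₂_functional_equation (1 / 2) (τ / 2),
    jacobiTheta₂_functional_equation (1 / 2) (3 * τ / 2)] at e2
  have a1 : -1 / (τ / 2) = 6 * (-1 / (3 * τ)) := by field_simp; try norm_num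
  have a2 : -1 / (3 * τ / 2) = 2 * (-1 / (3 * τ)) := by field_simp
  have a3 : 1 / 2 / (τ / 2) = - (3 * (-1 / (3 * τ))) := by field_simp
  have a4 : 1 / 2 / (3 * τ / 2) = - (-1 / (3 * τ)) := by field_simp
  have a5 : cexp (-Real.pi * I * (1 / 2) ^ 2 / (τ / 2)) = cexp (3 * Real.pi * I * (-1 / (3 * τ)) / 2) := by
    congr 1; field_simp; try norm_num
  have a6 : cexp (-Real.pi * I * (1 / 2) ^ 2 / (3 * τ / 2)) = cexp (Real.pi * I * (-1 / (3 * τ)) / 2) := by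
    congr 1; field_simp; try norm_num
  rw [a1, a2, a3, a4, a5, a6, jacobiTheta₂_neg_left, jacobiTheta₂_neg_left] at e2
  simp only [zero_div, mul_zero, ne_eq, OfNat.ofNat_ne_zero, not_false_eq_true, zero_pow,
    Complex.exp_zero, mul_one] at e2
  have s : (-I * (τ / 2)) ^ (1 / 2 : ℂ) * (-I * (3 * τ / 2)) ^ (1 / 2 : ℂ) = kap * τ / 2 := by
    have b1 : -I * (3 * τ / 2) = ((3 : ℝ) : ℂ) * (-I * (τ / 2)) := by push_cast; ring
    have b2 : -I * (τ / 2) ≠ 0 := by simp [h0]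
    have b3 : ((3 : ℝ) : ℂ) ^ (1 / 2 : ℂ) = (Real.sqrt 3 : ℂ) := by
      rw [Real.sqrt_eq_rpow, Complex.ofReal_cpow (by norm_num)]; norm_num
    have b4 : (((3 : ℝ) : ℂ) * (-I * (τ / 2))) ^ (1 / 2 : ℂ) =
        ((3 : ℝ) : ℂ) ^ (1 / 2 : ℂ) * (-I * (τ / 2)) ^ (1 / 2 : ℂ) := by
      rw [Complex.cpow_def_of_ne_zero (by simp [h0]), Complex.cpow_def_of_ne_zero (by simp),
        Complex.cpow_def_of_ne_zero b2, Complex.log_ofReal_mul (by norm_num) b2, add_mul,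
        Complex.exp_add, Complex.ofReal_log (by norm_num)]
    have b5 : (-I * (τ / 2)) ^ (1 / 2 : ℂ) * (-I * (τ / 2)) ^ (1 / 2 : ℂ) = -I * (τ / 2) := by
      rw [← Complex.cpow_add _ _ b2]; norm_num
    rw [b1, b4, b3, kap]
    linear_combination (Real.sqrt 3 : ℂ) * b5
  have k0 : kap ≠ 0 := by
    intro h; have := kap_sq; rw [h] at this; norm_num at this
  have s1 : (-I * (τ / 2)) ^ (1 / 2 : ℂ) ≠ 0 := by
    intro h; rw [h, zero_mul] at s
    exact (div_ne_zero (mul_ne_zero k0 h0) two_ne_zero) s.symm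
  have s2 : (-I * (3 * τ / 2)) ^ (1 / 2 : ℂ) ≠ 0 := by
    intro h; rw [h, mul_zero] at s
    exact (div_ne_zero (mul_ne_zero k0 h0) two_ne_zero) s.symm
  rw [show kap * τ * E13 τ = (kap * τ / 2) * (2 * E13 τ) by ring, ← s, ← e2]
  field_simp

lemma qq_ne_zero (τ : ℂ) : qq τ ≠ 0 := Complex.exp_ne_zero _

lemma norm_qq (τ : ℂ) : ‖qq τ‖ = Real.exp (-(2 * Real.pi * τ.im)) := by
  rw [qq, Complex.norm_exp]; congr 1; simp

lemma norm_qq_lt (τ : ℂ) (hτ : 0 < τ.im) : ‖qq τ‖ < 1 := by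
  rw [norm_qq, Real.exp_lt_one_iff]; have := Real.pi_pos; 
  have : 0 < 2 * Real.pi * τ.im := by positivity
  linarith

lemma qq_mem (τ : ℂ) (hτ : 0 < τ.im) : qq τ ∈ Metric.ball (0 : ℂ) 1 := by
  simpa using norm_qq_lt τ hτ

lemma two_pi_I_ne : (2 * Real.pi * I : ℂ) ≠ 0 := by
  simp [Real.pi_ne_zero]

lemma exists_qq (w : ℂ) (h0 : w ≠ 0) : ∃ τ, qq τ = w ∧ (‖w‖ < 1 → 0 < τ.im) := by
  have e : qq (Complex.log w / (2 * Real.pi * I)) = w := by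
    rw [qq, mul_div_cancel₀ _ two_pi_I_ne, Complex.exp_log h0]
  refine ⟨_, e, fun h => ?_⟩
  rw [← e, norm_qq, Real.exp_lt_one_iff] at h
  have := Real.pi_pos
  by_contra hc
  push Not at hc
  nlinarith

/-- The quadratic form, as a natural number. -/
def nn (p : ℤ × ℤ) : ℕ := (p.1 ^ 2 - p.1 * p.2 + p.2 ^ 2).toNat

lemma nn_cast (p : ℤ × ℤ) : (nn p : ℤ) = p.1 ^ 2 - p.1 * p.2 + p.2 ^ 2 := by
  rw [nn, Int.toNat_of_nonneg]; nlinarith [sq_nonneg (p.1 - p.2), sq_nonneg p.1, sq_nonneg p.2]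

lemma E13_hasSum_nn (τ : ℂ) (hτ : 0 < τ.im) : HasSum (fun p => qq τ ^ nn p) (E13 τ) := by
  have E := (E13_hasSum τ hτ)
  rw [← E13_eq τ hτ] at E
  refine hasSum_congr_fun E fun p => ?_
  rw [← nn_cast, zpow_natCast]

/-- Tail of the series. -/
def Bf (w : ℂ) : ℂ := ∑' p : ℤ × ℤ, if nn p < 6 then 0 else w ^ (nn p - 6)

lemma summable_pow_nn (r : ℝ) (h0 : 0 < r) (h1 : r < 1) : Summable (fun p => r ^ nn p) := by
  obtain ⟨τ, e, h⟩ := exists_qq (r : ℂ) (by exact_mod_cast h0.ne')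
  have hr : ‖(r : ℂ)‖ = r := by simp [abs_of_pos h0]
  have := (E13_hasSum_nn τ (h (by rwa [hr]))).summable.norm
  rw [e] at this
  simpa only [norm_pow, hr] using this

lemma Bf_bound (r : ℝ) (h0 : 0 < r) (p : ℤ × ℤ) (w : ℂ) (hw : ‖w‖ ≤ r) :
    ‖(if nn p < 6 then 0 else w ^ (nn p - 6) : ℂ)‖ ≤ (r ^ 6)⁻¹ * r ^ nn p := by
  split_ifs with h
  · simp; positivity
  · rw [norm_pow]
    calc ‖w‖ ^ (nn p - 6) ≤ r ^ (nn p - 6) := by gcongr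
      _ = (r ^ 6)⁻¹ * r ^ nn p := by
        rw [pow_sub₀ _ h0.ne' (by omega), mul_comm]

lemma Bf_diff : DifferentiableOn ℂ Bf (Metric.ball 0 1) := by
  intro w hw
  have hw1 : ‖w‖ < 1 := by simpa using hw
  obtain ⟨r, hr, hr1⟩ := exists_between hw1
  have h0 : 0 < r := lt_of_le_of_lt (norm_nonneg _) hr
  have := differentiableOn_tsum_of_summable_norm (U := Metric.ball (0 : ℂ) r)
    (F := fun (p : ℤ × ℤ) (w : ℂ) => if nn p < 6 then 0 else w ^ (nn p - 6))
    ((summable_pow_nn r h0 hr1).mul_left (r ^ 6)⁻¹)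
    (fun p => by
      by_cases h : nn p < 6
      · simp [h]
      · simp only [h, if_false]; fun_prop) Metric.isOpen_ball
    (fun p w hw => Bf_bound r h0 p w (by simpa using (le_of_lt (by simpa using hw))))
  exact ((this w (by simpa using hr)).differentiableAt
    (Metric.isOpen_ball.mem_nhds (by simpa using hr))).differentiableWithinAt

lemma Bf_summable (w : ℂ) (hw1 : ‖w‖ < 1) :
    Summable (fun p => if nn p < 6 then (0 : ℂ) else w ^ (nn p - 6)) := by
  obtain ⟨r, hr, hr1⟩ := exists_between hw1
  have h0 : 0 < r := lt_of_le_of_lt (norm_nonneg _) hr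
  exact Summable.of_norm_bounded ((summable_pow_nn r h0 hr1).mul_left (r ^ 6)⁻¹)
    (fun p => Bf_bound r h0 p w hr.le)

lemma head_sum (w : ℂ) : HasSum (fun p => if nn p < 6 then w ^ nn p else 0)
    (1 + 6 * w + 6 * w ^ 3 + 6 * w ^ 4) := by
  have h : HasSum (fun p => if nn p < 6 then w ^ nn p else 0)
      (∑ p ∈ Finset.Icc (-2 : ℤ) 2 ×ˢ Finset.Icc (-2 : ℤ) 2, if nn p < 6 then w ^ nn p else 0) :=
    hasSum_sum_of_ne_finset_zero (by
      rintro ⟨a, b⟩ hp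
      rw [if_neg]
      intro hlt
      apply hp
      have : ((nn (a, b) : ℕ) : ℤ) < 6 := by exact_mod_cast hlt
      rw [nn_cast] at this
      simp only at this
      have ha : a ^ 2 < 9 := by nlinarith [sq_nonneg (a - 2 * b)]
      have hb : b ^ 2 < 9 := by nlinarith [sq_nonneg (b - 2 * a)]
      simp only [Finset.mem_product, Finset.mem_Icc]
      refine ⟨⟨?_, ?_⟩, ?_, ?_⟩ <;> nlinarith)
  convert h using 1
  rw [Finset.sum_product, show Finset.Icc (-2 : ℤ) 2 = {-2, -1, 0, 1, 2} by decide]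
  simp [nn]
  ring

lemma E13_rep (τ : ℂ) (hτ : 0 < τ.im) : E13 τ =
    1 + 6 * qq τ + 6 * qq τ ^ 3 + 6 * qq τ ^ 4 + qq τ ^ 6 * Bf (qq τ) := by
  have h := (head_sum (qq τ)).add ((Bf_summable _ (norm_qq_lt τ hτ)).hasSum.mul_left (qq τ ^ 6))
  refine (E13_hasSum_nn τ hτ).unique (hasSum_congr_fun h fun p => ?_)
  split_ifs with h
  · simp
  · rw [zero_add, ← pow_add]; congr 1; omega

/-- `g` is given on the upper half plane by a function of `q` congruent to `P` modulo `q ^ 6`. -/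
def QRep (g P : ℂ → ℂ) : Prop := Differentiable ℂ P ∧
  ∃ B : ℂ → ℂ, DifferentiableOn ℂ B (Metric.ball 0 1) ∧
    ∀ τ : ℂ, 0 < τ.im → g τ = P (qq τ) + qq τ ^ 6 * B (qq τ)

lemma QRep.add {g h P Q : ℂ → ℂ} (hg : QRep g P) (hh : QRep h Q) :
    QRep (fun τ => g τ + h τ) (fun w => P w + Q w) := by
  obtain ⟨p, B, hB, e⟩ := hg
  obtain ⟨q, C, hC, e'⟩ := hh
  refine ⟨p.add q, fun w => B w + C w, hB.add hC, fun τ hτ => ?_⟩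
  simp only [e τ hτ, e' τ hτ]; ring

lemma QRep.sub {g h P Q : ℂ → ℂ} (hg : QRep g P) (hh : QRep h Q) :
    QRep (fun τ => g τ - h τ) (fun w => P w - Q w) := by
  obtain ⟨p, B, hB, e⟩ := hg
  obtain ⟨q, C, hC, e'⟩ := hh
  refine ⟨p.sub q, fun w => B w - C w, hB.sub hC, fun τ hτ => ?_⟩
  simp only [e τ hτ, e' τ hτ]; ring

lemma QRep.mul {g h P Q : ℂ → ℂ} (hg : QRep g P) (hh : QRep h Q) :
    QRep (fun τ => g τ * h τ) (fun w => P w * Q w) := by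
  obtain ⟨p, B, hB, e⟩ := hg
  obtain ⟨q, C, hC, e'⟩ := hh
  refine ⟨p.mul q, fun w => P w * C w + B w * Q w + w ^ 6 * (B w * C w), ?_, fun τ hτ => ?_⟩
  · have := p.differentiableOn (s := Metric.ball 0 1)
    have := q.differentiableOn (s := Metric.ball 0 1)
    fun_prop
  simp only [e τ hτ, e' τ hτ]; ring

lemma QRep.const (c : ℂ) : QRep (fun _ => c) (fun _ => c) :=
  ⟨differentiable_const _, fun _ => 0, differentiableOn_const _, fun τ _ => by simp⟩

lemma QRep.pow {g P : ℂ → ℂ} (hg : QRep g P) (n : ℕ) :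
    QRep (fun τ => g τ ^ n) (fun w => P w ^ n) := by
  induction n with
  | zero => simpa using QRep.const 1
  | succ n ih => simpa only [pow_succ] using ih.mul hg

lemma hasDerivAt_qq (τ : ℂ) : HasDerivAt qq (qq τ * (2 * Real.pi * I)) τ := by
  have := ((hasDerivAt_id τ).const_mul (2 * Real.pi * I : ℂ)).cexp
  rw [mul_one] at this
  exact this

lemma im_nhds (τ : ℂ) (hτ : 0 < τ.im) : ∀ᶠ z in nhds τ, 0 < z.im :=
  (isOpen_lt continuous_const Complex.continuous_im).mem_nhds hτ

lemma QRep.hasDerivAt {g P B : ℂ → ℂ} (hP : Differentiable ℂ P)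
    (hB : DifferentiableOn ℂ B (Metric.ball 0 1))
    (e : ∀ τ : ℂ, 0 < τ.im → g τ = P (qq τ) + qq τ ^ 6 * B (qq τ)) (τ : ℂ) (hτ : 0 < τ.im) :
    HasDerivAt g ((2 * Real.pi * I) * (qq τ * deriv P (qq τ) +
      qq τ ^ 6 * (6 * B (qq τ) + qq τ * deriv B (qq τ)))) τ := by
  have hq := hasDerivAt_qq τ
  have h1 := (hP (qq τ)).hasDerivAt.comp τ hq
  have h2 := ((hB _ (qq_mem τ hτ)).differentiableAt
    (Metric.isOpen_ball.mem_nhds (qq_mem τ hτ))).hasDerivAt.comp τ hq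
  have h3 := h1.add ((hq.pow 6).mul h2)
  refine (h3.congr_of_eventuallyEq ?_).congr_deriv ?_
  · filter_upwards [im_nhds τ hτ] with z hz
    simp [e z hz]
  · simp; ring

lemma QRep.differentiableAt {g P : ℂ → ℂ} (hg : QRep g P) (τ : ℂ) (hτ : 0 < τ.im) :
    HasDerivAt g ((2 * Real.pi * I) * nderiv g τ) τ := by
  obtain ⟨p, B, hB, e⟩ := hg
  have := QRep.hasDerivAt p hB e τ hτ
  rw [nderiv, mul_inv_cancel_left₀ two_pi_I_ne]
  exact this.differentiableAt.hasDerivAt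

lemma QRep.nderiv {g P : ℂ → ℂ} (hg : QRep g P) {P' : ℂ → ℂ} (hP : ∀ w, HasDerivAt P (P' w) w)
    (hP' : Differentiable ℂ P') :
    QRep (nderiv g) (fun w => w * P' w) := by
  obtain ⟨p, B, hB, e⟩ := hg
  refine ⟨differentiable_id.mul hP', fun w => 6 * B w + w * deriv B w, ?_, fun τ hτ => ?_⟩
  · have := hB.deriv Metric.isOpen_ball
    fun_prop
  · have := QRep.hasDerivAt p hB e τ hτ
    rw [_root_.nderiv, this.deriv, inv_mul_cancel_left₀ two_pi_I_ne, (hP _).deriv]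

lemma rep0 : QRep E13 (fun w => 1 + 6 * w + 6 * w ^ 3 + 6 * w ^ 4) :=
  ⟨by fun_prop, Bf, Bf_diff, E13_rep⟩

lemma poly_deriv (a b c d w : ℂ) : HasDerivAt (fun w : ℂ => a + b * w + c * w ^ 3 + d * w ^ 4)
    (b + 3 * c * w ^ 2 + 4 * d * w ^ 3) w := by
  have h := ((((hasDerivAt_id w).const_mul b).const_add a).add
    ((hasDerivAt_pow 3 w).const_mul c)).add ((hasDerivAt_pow 4 w).const_mul d)
  exact h.congr_deriv (by simp; ring)

lemma rep1 : QRep (nderiv E13) (fun w => 0 + 6 * w + 18 * w ^ 3 + 24 * w ^ 4) := by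
  convert QRep.nderiv rep0 (fun w => poly_deriv 1 6 6 6 w) (by fun_prop) using 2
  ring

lemma rep2 : QRep (nderiv (nderiv E13)) (fun w => 0 + 6 * w + 54 * w ^ 3 + 96 * w ^ 4) := by
  convert QRep.nderiv rep1 (fun w => poly_deriv 0 6 18 24 w) (by fun_prop) using 2
  ring

lemma rep3 : QRep (nderiv (nderiv (nderiv E13)))
    (fun w => 0 + 6 * w + 162 * w ^ 3 + 384 * w ^ 4) := by
  convert QRep.nderiv rep2 (fun w => poly_deriv 0 6 54 96 w) (by fun_prop) using 2
  ring

/-- The left-hand side of the differential equation. -/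
def Fode (τ : ℂ) : ℂ :=
      E13 τ ^ 2 * (nderiv (nderiv (nderiv E13)) τ) ^ 2 -
      6 * nderiv E13 τ * (3 * E13 τ * nderiv (nderiv E13) τ - 4 * (nderiv E13 τ) ^ 2) *
        nderiv (nderiv (nderiv E13)) τ +
      18 * E13 τ * (nderiv (nderiv E13) τ) ^ 3 -
      (E13 τ ^ 6 + 27 * (nderiv E13 τ) ^ 2) * (nderiv (nderiv E13) τ) ^ 2 +
      4 * E13 τ ^ 5 * (nderiv E13 τ) ^ 2 * nderiv (nderiv E13) τ -
      4 * E13 τ ^ 4 * (nderiv E13 τ) ^ 4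

lemma Fode_rep : ∃ G : ℂ → ℂ, DifferentiableOn ℂ G (Metric.ball 0 1) ∧
    ∀ τ : ℂ, 0 < τ.im → Fode τ = qq τ ^ 6 * G (qq τ) := by
  have C := QRep.const
  obtain ⟨-, B, hB, e⟩ : QRep Fode _ :=
    (((((rep0.pow 2).mul (rep3.pow 2)).sub
      ((((C 6).mul rep1).mul ((((C 3).mul rep0).mul rep2).sub ((C 4).mul (rep1.pow 2)))).mul
        rep3)).add (((C 18).mul rep0).mul (rep2.pow 3))).sub
      (((rep0.pow 6).add ((C 27).mul (rep1.pow 2))).mul (rep2.pow 2))).add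
      ((((C 4).mul (rep0.pow 5)).mul (rep1.pow 2)).mul rep2) |>.sub
      (((C 4).mul (rep0.pow 4)).mul (rep1.pow 4))
  refine ⟨fun w => ((-42336) * w ^ 2 + (1513728) * w ^ 3 + (-5287680) * w ^ 4 + (6849792) * w ^ 5 + (-15304464) * w ^ 6 + (22529664) * w ^ 7 + (34242912) * w ^ 8 + (-20134656) * w ^ 9 + (-168231168) * w ^ 10 + (-1081019520) * w ^ 11 + (-3145423104) * w ^ 12 + (-6992303616) * w ^ 13 + (-13501188864) * w ^ 14 + (-21603034368) * w ^ 15 + (-31065197760) * w ^ 16 + (-40812989184) * w ^ 17 + (-46606917888) * w ^ 18 + (-48033098496) * w ^ 19 + (-45761137920) * w ^ 20 + (-37671547392) * w ^ 21 + (-26588881152) * w ^ 22 + (-16987636224) * w ^ 23 + (-8896925952) * w ^ 24 + (-2956124160) * w ^ 25 + (-429981696) * w ^ 26) + B w, by fun_prop, fun τ hτ => ?_⟩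
  rw [e τ hτ]
  generalize qq τ = w
  ring

/-- Abbreviation for `1 / (2πi)`. -/
def cc : ℂ := (2 * Real.pi * I)⁻¹

lemma cc_mul : cc * (2 * Real.pi * I) = 1 := inv_mul_cancel₀ two_pi_I_ne

lemma nderiv_fricke {g h : ℂ → ℂ} {h' : ℂ} (τ : ℂ) (hτ : 0 < τ.im)
    (hg : DifferentiableAt ℂ g (-1 / (3 * τ)))
    (e : ∀ z : ℂ, 0 < z.im → g (-1 / (3 * z)) = h z) (hh : HasDerivAt h h' τ) :
    nderiv g (-1 / (3 * τ)) = 3 * τ ^ 2 * (cc * h') := by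
  have h0 : τ ≠ 0 := by rintro rfl; simp at hτ
  have hW : HasDerivAt (fun z : ℂ => -1 / (3 * z)) (1 / (3 * τ ^ 2)) τ := by
    have := ((hasDerivAt_inv h0).const_mul (-1 / 3 : ℂ))
    refine (this.congr_of_eventuallyEq ?_).congr_deriv ?_
    · filter_upwards with z
      change -1 / (3 * z) = (-1 / 3) * z⁻¹
      ring
    · field_simp
  have h1 := hg.hasDerivAt.comp τ hW
  have h2 : HasDerivAt (g ∘ fun z : ℂ => -1 / (3 * z)) h' τ := by
    refine hh.congr_of_eventuallyEq ?_
    filter_upwards [im_nhds τ hτ] with z hz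
    exact e z hz
  rw [← h1.unique h2, nderiv, cc]
  field_simp

lemma fricke1 (τ : ℂ) (hτ : 0 < τ.im) : nderiv E13 (-1 / (3 * τ)) =
    kap * (3 * (τ ^ 3 * nderiv E13 τ + cc * τ ^ 2 * E13 τ)) := by
  have d := (rep0.differentiableAt τ hτ)
  rw [nderiv_fricke τ hτ (rep0.differentiableAt _ (im_fricke_pos τ hτ)).differentiableAt E13_fricke
    (((hasDerivAt_id τ).const_mul kap).mul d)]
  simp only [id]
  linear_combination (3 * τ ^ 3 * kap * nderiv E13 τ) * cc_mul

lemma fricke2 (τ : ℂ) (hτ : 0 < τ.im) : nderiv (nderiv E13) (-1 / (3 * τ)) =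
    kap * (9 * (τ ^ 5 * nderiv (nderiv E13) τ + 4 * cc * τ ^ 4 * nderiv E13 τ +
      2 * cc ^ 2 * τ ^ 3 * E13 τ)) := by
  have d := (rep0.differentiableAt τ hτ)
  have d1 := (rep1.differentiableAt τ hτ)
  rw [nderiv_fricke τ hτ (rep1.differentiableAt _ (im_fricke_pos τ hτ)).differentiableAt fricke1
    ((((((hasDerivAt_id τ).pow 3).mul d1).add
      ((((hasDerivAt_id τ).pow 2).const_mul cc).mul d)).const_mul 3).const_mul kap)]
  simp only [id, Pi.pow_apply]
  push_cast
  linear_combination (9 * τ ^ 5 * kap * nderiv (nderiv E13) τ +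
    9 * cc * τ ^ 4 * kap * nderiv E13 τ) * cc_mul

lemma fricke3 (τ : ℂ) (hτ : 0 < τ.im) : nderiv (nderiv (nderiv E13)) (-1 / (3 * τ)) =
    kap * (27 * (τ ^ 7 * nderiv (nderiv (nderiv E13)) τ + 9 * cc * τ ^ 6 * nderiv (nderiv E13) τ +
      18 * cc ^ 2 * τ ^ 5 * nderiv E13 τ + 6 * cc ^ 3 * τ ^ 4 * E13 τ)) := by
  have d := (rep0.differentiableAt τ hτ)
  have d1 := (rep1.differentiableAt τ hτ)
  have d2 := (rep2.differentiableAt τ hτ)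
  rw [nderiv_fricke τ hτ (rep2.differentiableAt _ (im_fricke_pos τ hτ)).differentiableAt fricke2
    (((((((hasDerivAt_id τ).pow 5).mul d2).add
      ((((hasDerivAt_id τ).pow 4).const_mul (4 * cc)).mul d1)).add
      ((((hasDerivAt_id τ).pow 3).const_mul (2 * cc ^ 2)).mul d)).const_mul 9).const_mul kap)]
  simp only [id, Pi.pow_apply]
  push_cast
  linear_combination (27 * τ ^ 7 * kap * nderiv (nderiv (nderiv E13)) τ +
    108 * cc * τ ^ 6 * kap * nderiv (nderiv E13) τ +
    54 * cc ^ 2 * τ ^ 5 * kap * nderiv E13 τ) * cc_mul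

lemma ode_hom (k x0 x1 x2 x3 : ℂ) (hk : k ^ 4 = 9) :
    (k * x0) ^ 2 * (k * x3) ^ 2 -
      6 * (k * x1) * (3 * (k * x0) * (k * x2) - 4 * (k * x1) ^ 2) * (k * x3) +
      18 * (k * x0) * (k * x2) ^ 3 -
      ((k * x0) ^ 6 + 27 * (k * x1) ^ 2) * (k * x2) ^ 2 +
      4 * (k * x0) ^ 5 * (k * x1) ^ 2 * (k * x2) -
      4 * (k * x0) ^ 4 * (k * x1) ^ 4 =
    9 * (x0 ^ 2 * x3 ^ 2 - 6 * x1 * (3 * x0 * x2 - 4 * x1 ^ 2) * x3 + 18 * x0 * x2 ^ 3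
      - 27 * x1 ^ 2 * x2 ^ 2) +
    81 * (- x0 ^ 6 * x2 ^ 2 + 4 * x0 ^ 5 * x1 ^ 2 * x2 - 4 * x0 ^ 4 * x1 ^ 4) := by
  have h8 : k ^ 8 = 81 := by
    rw [show k ^ 8 = (k ^ 4) ^ 2 by ring, hk]; norm_num
  rw [← hk, ← h8]; ring

lemma Fode_fricke (τ : ℂ) (hτ : 0 < τ.im) :
    Fode (-1 / (3 * τ)) = 3 ^ 8 * τ ^ 16 * Fode τ := by
  have hk : kap ^ 4 = 9 := by
    rw [show kap ^ 4 = (kap ^ 2) ^ 2 by ring, kap_sq]; norm_num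
  rw [Fode, Fode, fricke1 τ hτ, fricke2 τ hτ, fricke3 τ hτ, E13_fricke τ hτ, mul_assoc kap τ,
    ode_hom _ _ _ _ _ hk]
  ring

/-- The invariant function. -/
def phi (τ : ℂ) : ℝ := ‖Fode τ‖ * τ.im ^ 8

lemma phi_fricke (τ : ℂ) (hτ : 0 < τ.im) : phi (-1 / (3 * τ)) = phi τ := by
  have h0 : τ ≠ 0 := by rintro rfl; simp at hτ
  have hn : ‖τ‖ ≠ 0 := by simpa using h0
  rw [phi, phi, Fode_fricke τ hτ, im_fricke, Complex.normSq_eq_norm_sq]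
  simp only [norm_mul, norm_pow]
  norm_num
  field_simp
  ring

lemma qq_add (τ : ℂ) (n : ℤ) : qq (τ + n) = qq τ := by
  rw [qq, qq, Complex.exp_eq_exp_iff_exists_int]
  exact ⟨n, by ring⟩

lemma phi_add (τ : ℂ) (n : ℤ) (hτ : 0 < τ.im) : phi (τ + n) = phi τ := by
  obtain ⟨G, -, e⟩ := Fode_rep
  have him : (τ + n).im = τ.im := by simp
  rw [phi, phi, e τ hτ, e _ (by rwa [him]), qq_add, him]

lemma exists_large_aux (n : ℕ) : ∀ τ : ℂ, 0 < τ.im → 1 / 4 ≤ τ.im * (16 / 15) ^ n →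
    ∃ z : ℂ, 1 / 4 ≤ z.im ∧ phi z = phi τ := by
  induction n with
  | zero => intro τ _ h; exact ⟨τ, by simpa using h, rfl⟩
  | succ n ih =>
    intro τ hτ h
    by_cases hc : 1 / 4 ≤ τ.im
    · exact ⟨τ, hc, rfl⟩
    push Not at hc
    set σ : ℂ := τ + (-round τ.re : ℤ) with hσ
    have him : σ.im = τ.im := by simp [hσ]
    have hre : |σ.re| ≤ 1 / 2 := by
      have := abs_sub_round τ.re
      rw [hσ]
      simpa [sub_eq_add_neg] using this
    have hσ0 : 0 < σ.im := by rwa [him]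
    have hns : normSq σ ≤ 5 / 16 := by
      rw [Complex.normSq_apply]
      have := abs_le.1 hre
      nlinarith
    have hpos : 0 < normSq σ := Complex.normSq_pos.2 (by intro h; rw [h] at hσ0; simp at hσ0)
    have hgrow : τ.im * (16 / 15) ≤ (-1 / (3 * σ)).im := by
      rw [im_fricke, him, le_div_iff₀ (by positivity)]
      nlinarith
    obtain ⟨z, hz, e⟩ := ih (-1 / (3 * σ)) (im_fricke_pos σ hσ0) (by
      refine h.trans ?_
      rw [pow_succ', ← mul_assoc]
      gcongr)
    exact ⟨z, hz, by rw [e, phi_fricke σ hσ0, hσ, phi_add _ _ hτ]⟩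

lemma exists_large (τ : ℂ) (hτ : 0 < τ.im) : ∃ z : ℂ, 1 / 4 ≤ z.im ∧ phi z = phi τ := by
  obtain ⟨n, hn⟩ := pow_unbounded_of_one_lt (1 / 4 / τ.im) (show (1 : ℝ) < 16 / 15 by norm_num)
  refine exists_large_aux n τ hτ ?_
  rw [div_lt_iff₀ hτ] at hn
  linarith

lemma u_lt (y : ℝ) (hy : 1 / 4 ≤ y) :
    Real.exp (-(2 * Real.pi * y)) ^ 6 * y ^ 8 <
      Real.exp (-(2 * Real.pi * (22 / 100))) ^ 6 * (22 / 100) ^ 8 := by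
  have hpi := Real.pi_gt_d2
  have h1 : y ≤ 22 / 100 * Real.exp (y / (22 / 100) - 1) := by
    have := Real.add_one_le_exp (y / (22 / 100) - 1)
    linarith
  have h2 : y ^ 8 ≤ (22 / 100) ^ 8 * Real.exp (8 * (y / (22 / 100) - 1)) := by
    calc y ^ 8 ≤ (22 / 100 * Real.exp (y / (22 / 100) - 1)) ^ 8 := by gcongr
      _ = _ := by rw [mul_pow, ← Real.exp_nat_mul]; norm_num
  calc Real.exp (-(2 * Real.pi * y)) ^ 6 * y ^ 8
      ≤ Real.exp (-(2 * Real.pi * y)) ^ 6 *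
        ((22 / 100) ^ 8 * Real.exp (8 * (y / (22 / 100) - 1))) := by gcongr
    _ = Real.exp (6 * (-(2 * Real.pi * y)) + 8 * (y / (22 / 100) - 1)) * (22 / 100) ^ 8 := by
        rw [Real.exp_add, ← Real.exp_nat_mul]; push_cast; ring
    _ < Real.exp (6 * (-(2 * Real.pi * (22 / 100)))) * (22 / 100) ^ 8 := by
        gcongr
        nlinarith
    _ = _ := by rw [← Real.exp_nat_mul]; push_cast; ring

lemma Fode_zero (τ : ℂ) (hτ : 0 < τ.im) : Fode τ = 0 := by
  obtain ⟨G, hG, e⟩ := Fode_rep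
  set r : ℝ := Real.exp (-(2 * Real.pi * (22 / 100))) with hr
  have hr0 : 0 < r := Real.exp_pos _
  have hr1 : r < 1 := by
    rw [hr, Real.exp_lt_one_iff]; have := Real.pi_pos; linarith
  have hcl : closure (Metric.ball (0 : ℂ) r) = Metric.closedBall 0 r := closure_ball _ hr0.ne'
  have hd : DiffContOnCl ℂ G (Metric.ball 0 r) := by
    refine DifferentiableOn.diffContOnCl ?_
    rw [hcl]
    exact hG.mono (Metric.closedBall_subset_ball hr1)
  obtain ⟨w, hw, hmax⟩ := Complex.exists_mem_frontier_isMaxOn_norm Metric.isBounded_ball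
    (Metric.nonempty_ball.2 hr0) hd
  rw [frontier_ball _ hr0.ne', mem_sphere_zero_iff_norm] at hw
  rw [hcl] at hmax
  obtain ⟨t, ht, hti⟩ := exists_qq w (by intro h; rw [h, norm_zero] at hw; exact hr0.ne hw)
  have ht0 : 0 < t.im := hti (by rwa [hw])
  have htim : t.im = 22 / 100 := by
    rw [← ht, norm_qq, hr, Real.exp_eq_exp] at hw
    have := Real.pi_pos
    nlinarith
  have phi_eq : ∀ z : ℂ, 0 < z.im → phi z =
      ‖G (qq z)‖ * (Real.exp (-(2 * Real.pi * z.im)) ^ 6 * z.im ^ 8) := by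
    intro z hz
    rw [phi, e z hz, norm_mul, norm_pow, norm_qq]; ring
  have bound : ∀ z : ℂ, 1 / 4 ≤ z.im → ‖G (qq z)‖ ≤ ‖G w‖ := by
    intro z hz
    refine hmax (a := qq z) ?_
    rw [mem_closedBall_zero_iff, norm_qq, hr, Real.exp_le_exp]
    have := Real.pi_pos
    nlinarith
  have hw0 : ‖G w‖ = 0 := by
    obtain ⟨z, hz, ez⟩ := exists_large t ht0
    rw [phi_eq z (by linarith), phi_eq t ht0, ht, htim] at ez
    have hu := u_lt z.im hz
    have hb := bound z hz
    by_contra hne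
    have hpos : 0 < ‖G w‖ := lt_of_le_of_ne (norm_nonneg _) (Ne.symm hne)
    have h1 : ‖G (qq z)‖ * (Real.exp (-(2 * Real.pi * z.im)) ^ 6 * z.im ^ 8) ≤
        ‖G w‖ * (Real.exp (-(2 * Real.pi * z.im)) ^ 6 * z.im ^ 8) := by gcongr
    have h2 := mul_lt_mul_of_pos_left hu hpos
    linarith
  obtain ⟨z, hz, ez⟩ := exists_large τ hτ
  have hb := bound z hz
  rw [hw0] at hb
  have hz0 : ‖G (qq z)‖ = 0 := le_antisymm hb (norm_nonneg _)
  rw [phi_eq z (by linarith), hz0, zero_mul, phi] at ez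
  have : τ.im ^ 8 ≠ 0 := by positivity
  have := (mul_eq_zero.1 ez.symm).resolve_right this
  simpa using this

/-- The Eisenstein series `E_{1,3}` satisfies a third-order nonlinear ODE. -/
theorem E13_third_order_ODE :
    ∀ τ : ℂ, 0 < τ.im →
      E13 τ ^ 2 * (nderiv (nderiv (nderiv E13)) τ) ^ 2 -
      6 * nderiv E13 τ * (3 * E13 τ * nderiv (nderiv E13) τ - 4 * (nderiv E13 τ) ^ 2) *
        nderiv (nderiv (nderiv E13)) τ +
      18 * E13 τ * (nderiv (nderiv E13) τ) ^ 3 -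
      (E13 τ ^ 6 + 27 * (nderiv E13 τ) ^ 2) * (nderiv (nderiv E13) τ) ^ 2 +
      4 * E13 τ ^ 5 * (nderiv E13 τ) ^ 2 * nderiv (nderiv E13) τ -
      4 * E13 τ ^ 4 * (nderiv E13 τ) ^ 4 = 0 := by
  exact Fode_zero
end
end

section
/- The weight-one level-three Eisenstein series f = E_{1,3} satisfies the fourth-order nonlinear ODE: for every τ ∈ ℍ, ff''''(ff'' − 2(f')²) − f²(f''')² + 2f'(ff'' + 4(f')²)f''' − 9(f')²(f'')² = 0. -/
open Complex

noncomputable section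

namespace E13proof

def Qn (p : ℤ × ℤ) : ℕ := (p.1 ^ 2 - p.1 * p.2 + p.2 ^ 2).toNat

lemma Q_nonneg (p : ℤ × ℤ) : 0 ≤ p.1 ^ 2 - p.1 * p.2 + p.2 ^ 2 := by
  nlinarith [sq_nonneg (p.1 - p.2), sq_nonneg p.1, sq_nonneg p.2]

lemma Qn_cast (p : ℤ × ℤ) : (Qn p : ℤ) = p.1 ^ 2 - p.1 * p.2 + p.2 ^ 2 :=
  Int.toNat_of_nonneg (Q_nonneg p)

lemma natAbs_le (p : ℤ × ℤ) : p.1.natAbs + p.2.natAbs ≤ 2 * Qn p := by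
  have h1 : ∀ x : ℤ, |x| ≤ x ^ 2 := fun x => by
    have := Int.natAbs_le_self_sq x
    rw [Int.natCast_natAbs] at this
    exact this
  zify
  rw [Qn_cast]
  nlinarith [h1 p.1, h1 p.2, sq_nonneg (p.1 - p.2)]

lemma summable_r {r : ℝ} (h0 : 0 ≤ r) (h1 : r < 1) : Summable fun p : ℤ × ℤ => r ^ Qn p := by
  set s := Real.sqrt r with hs
  have hs0 : 0 ≤ s := Real.sqrt_nonneg r
  have hs1 : s < 1 := by rw [hs, Real.sqrt_lt' one_pos]; simpa using h1
  have hsr : s ^ 2 = r := Real.sq_sqrt h0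
  have hz : Summable fun n : ℤ => s ^ n.natAbs := by
    apply Summable.of_nat_of_neg
    · simpa using summable_geometric_of_lt_one hs0 hs1
    · simpa using summable_geometric_of_lt_one hs0 hs1
  have hp := hz.mul_of_nonneg hz (fun n => pow_nonneg hs0 _) (fun n => pow_nonneg hs0 _)
  refine Summable.of_nonneg_of_le (fun p => pow_nonneg h0 _) (fun p => ?_) hp
  rw [← pow_add, ← hsr, ← pow_mul]
  exact pow_le_pow_of_le_one hs0 hs1.le (natAbs_le p)

def hterm (p : ℤ × ℤ) (q : ℂ) : ℂ := if 5 ≤ Qn p then q ^ (Qn p - 5) else 0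

def h0 (q : ℂ) : ℂ := ∑' p : ℤ × ℤ, hterm p q

lemma hterm_bound {r : ℝ} (hr : 0 < r) {q : ℂ} (hq : ‖q‖ ≤ r) (p : ℤ × ℤ) :
    ‖hterm p q‖ ≤ (r ^ 5)⁻¹ * r ^ Qn p := by
  unfold hterm
  split_ifs with h
  · rw [norm_pow]
    refine (pow_le_pow_left₀ (norm_nonneg _) hq _).trans (le_of_eq ?_)
    rw [pow_sub₀ _ hr.ne' h, mul_comm]
  · simp only [norm_zero]; positivity

lemma h0_diff : DifferentiableOn ℂ h0 (Metric.ball 0 1) := by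
  intro q hq
  have hq1 : ‖q‖ < 1 := by simpa using hq
  obtain ⟨r, hr1, hr2⟩ := exists_between hq1
  have hr0 : 0 < r := (norm_nonneg q).trans_lt hr1
  have : DifferentiableOn ℂ h0 (Metric.ball 0 r) := by
    unfold h0
    refine Complex.differentiableOn_tsum_of_summable_norm
      ((summable_r hr0.le hr2).mul_left ((r ^ 5)⁻¹)) (fun p => ?_) Metric.isOpen_ball ?_
    · unfold hterm
      split_ifs
      · fun_prop
      · fun_prop
    · intro p w hw
      exact hterm_bound hr0 (by simpa using (le_of_lt (by simpa using hw : ‖w‖ < r))) p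
  exact (this.differentiableAt (Metric.isOpen_ball.mem_nhds (by simpa using hr1))).differentiableWithinAt

lemma qq_norm (τ : ℂ) : ‖qq τ‖ = Real.exp (-2 * Real.pi * τ.im) := by
  unfold qq
  rw [Complex.norm_exp]
  congr 1
  simp

lemma qq_mem {τ : ℂ} (h : 0 < τ.im) : qq τ ∈ Metric.ball (0:ℂ) 1 := by
  have : 0 < Real.pi * τ.im := mul_pos Real.pi_pos h
  simp only [Metric.mem_ball, dist_zero_right, qq_norm]
  rw [Real.exp_lt_one_iff]
  linarith

lemma qq_ne (τ : ℂ) : qq τ ≠ 0 := Complex.exp_ne_zero _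

def box : Finset (ℤ × ℤ) := Finset.Icc (-2) 2 ×ˢ Finset.Icc (-2) 2

lemma mem_box {p : ℤ × ℤ} (h : Qn p < 5) : p ∈ box := by
  have h2 : p.1 ^ 2 - p.1 * p.2 + p.2 ^ 2 ≤ 4 := by rw [← Qn_cast]; omega
  have ha : 3 * p.1 ^ 2 ≤ 16 := by nlinarith [sq_nonneg (p.1 - 2 * p.2)]
  have hb : 3 * p.2 ^ 2 ≤ 16 := by nlinarith [sq_nonneg (2 * p.1 - p.2)]
  simp only [box, Finset.mem_product, Finset.mem_Icc]
  refine ⟨⟨?_, ?_⟩, ?_, ?_⟩ <;> nlinarith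

lemma E13_sum {τ : ℂ} (h : 0 < τ.im) :
    Summable fun p : ℤ × ℤ => qq τ ^ (p.1 ^ 2 - p.1 * p.2 + p.2 ^ 2) := by
  have h1 : ‖qq τ‖ < 1 := by simpa using qq_mem h
  refine Summable.of_norm_bounded (summable_r (norm_nonneg _) h1) (fun p => ?_)
  rw [← Qn_cast, zpow_natCast, norm_pow]

lemma low_sum (q : ℂ) : ∑ p ∈ box, (if Qn p < 5 then q ^ Qn p else 0)
    = 1 + 6 * q + 6 * q ^ 3 + 6 * q ^ 4 := by
  have hI : (Finset.Icc (-2) 2 : Finset ℤ) = {-2, -1, 0, 1, 2} := by decide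
  rw [box, Finset.sum_product, hI]
  simp [Qn]
  ring

lemma E13_eq {τ : ℂ} (h : 0 < τ.im) : E13 τ =
    1 + 6 * qq τ + 6 * qq τ ^ 3 + 6 * qq τ ^ 4 + qq τ ^ 5 * h0 (qq τ) := by
  have h1 : ‖qq τ‖ < 1 := by simpa using qq_mem h
  have hr0 : 0 < ‖qq τ‖ := norm_pos_iff.mpr (qq_ne τ)
  have hs : Summable fun p => hterm p (qq τ) :=
    Summable.of_norm_bounded ((summable_r hr0.le h1).mul_left _) (hterm_bound hr0 le_rfl)
  have hlow : HasSum (fun p => if Qn p < 5 then qq τ ^ Qn p else 0)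
      (∑ p ∈ box, (if Qn p < 5 then qq τ ^ Qn p else 0)) := by
    apply hasSum_sum_of_ne_finset_zero
    intro p hp
    rw [if_neg]
    exact fun h => hp (mem_box h)
  have hh := hlow.add (hs.hasSum.mul_left (qq τ ^ 5))
  rw [low_sum] at hh
  refine Eq.trans ?_ hh.tsum_eq
  rw [E13]
  congr 1
  ext p
  rw [← Qn_cast, zpow_natCast, hterm]
  split_ifs with ha hb hb
  · omega
  · simp
  · rw [zero_add, ← pow_add]; congr 1; omega
  · omega

/-! ### derivatives through q -/

lemma hasDerivAt_comp {g : ℂ → ℂ} (hg : DifferentiableOn ℂ g (Metric.ball 0 1))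
    {G : ℂ → ℂ} (hG : ∀ τ : ℂ, 0 < τ.im → G τ = g (qq τ)) {τ : ℂ} (h : 0 < τ.im) :
    HasDerivAt G (2 * Real.pi * I * (qq τ * deriv g (qq τ))) τ := by
  have h1 : HasDerivAt g (deriv g (qq τ)) (qq τ) :=
    (hg.differentiableAt (Metric.isOpen_ball.mem_nhds (qq_mem h))).hasDerivAt
  have h2 : HasDerivAt qq (qq τ * (2 * Real.pi * I)) τ := by
    have := ((hasDerivAt_id τ).const_mul (2 * Real.pi * I : ℂ)).cexp
    rw [id, mul_one] at this
    exact this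
  have h3 := h1.comp τ h2
  have h4 : G =ᶠ[nhds τ] (g ∘ qq) := by
    filter_upwards [(isOpen_lt continuous_const Complex.continuous_im).mem_nhds h] with z hz
    exact hG z hz
  refine (h3.congr_of_eventuallyEq h4).congr_deriv ?_
  ring

lemma nderiv_comp {g : ℂ → ℂ} (hg : DifferentiableOn ℂ g (Metric.ball 0 1))
    {G : ℂ → ℂ} (hG : ∀ τ : ℂ, 0 < τ.im → G τ = g (qq τ)) (τ : ℂ) (h : 0 < τ.im) :
    nderiv G τ = qq τ * deriv g (qq τ) := by
  rw [nderiv, (hasDerivAt_comp hg hG h).deriv, ← mul_assoc, inv_mul_cancel₀, one_mul]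
  exact Complex.two_pi_I_ne_zero

def hs (u : ℂ → ℂ) : ℂ → ℂ := fun q => 5 * u q + q * deriv u q

lemma hs_diff {u : ℂ → ℂ} (hu : DifferentiableOn ℂ u (Metric.ball 0 1)) :
    DifferentiableOn ℂ (hs u) (Metric.ball 0 1) := by
  have := hu.deriv Metric.isOpen_ball
  unfold hs
  fun_prop

lemma step {u : ℂ → ℂ} (hu : DifferentiableOn ℂ u (Metric.ball 0 1)) (a b c d : ℂ)
    {G : ℂ → ℂ} (hG : ∀ τ : ℂ, 0 < τ.im →
      G τ = a + b * qq τ + c * qq τ ^ 3 + d * qq τ ^ 4 + qq τ ^ 5 * u (qq τ)) :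
    (∀ τ : ℂ, 0 < τ.im → DifferentiableAt ℂ G τ) ∧ ∀ τ : ℂ, 0 < τ.im →
      nderiv G τ = 0 + b * qq τ + (3 * c) * qq τ ^ 3 + (4 * d) * qq τ ^ 4
        + qq τ ^ 5 * hs u (qq τ) := by
  set g : ℂ → ℂ := fun q => a + b * q + c * q ^ 3 + d * q ^ 4 + q ^ 5 * u q with hgdef
  have hg : DifferentiableOn ℂ g (Metric.ball 0 1) := by fun_prop
  refine ⟨fun τ h => (hasDerivAt_comp hg (G := G) hG h).differentiableAt, fun τ h => ?_⟩
  rw [nderiv_comp hg hG τ h]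
  have h1 : HasDerivAt u (deriv u (qq τ)) (qq τ) :=
    (hu.differentiableAt (Metric.isOpen_ball.mem_nhds (qq_mem h))).hasDerivAt
  have h2 := (((((hasDerivAt_id (qq τ)).const_mul b).const_add a).add
    (((hasDerivAt_id (qq τ)).pow 3).const_mul c)).add
    (((hasDerivAt_id (qq τ)).pow 4).const_mul d)).add (((hasDerivAt_id (qq τ)).pow 5).mul h1)
  have h3 : deriv g (qq τ) = _ := h2.deriv
  rw [h3]
  simp [hs]
  ring

/-! ### theta functions -/

def tA (τ : ℂ) : ℂ := jacobiTheta₂ 0 (2 * τ)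
def tB (τ : ℂ) : ℂ := cexp (Real.pi * I * τ / 2) * jacobiTheta₂ τ (2 * τ)

lemma im_two {τ : ℂ} (h : 0 < τ.im) : 0 < (2 * τ).im := by simpa using h

lemma im_three {τ : ℂ} (h : 0 < τ.im) : 0 < (3 * τ).im := by simpa using h

lemma hasSum_tA {τ : ℂ} (h : 0 < τ.im) :
    HasSum (fun n : ℤ => cexp (2 * Real.pi * I * τ * n ^ 2)) (tA τ) := by
  convert! hasSum_jacobiTheta₂_term 0 (im_two h) using 1
  ext n
  rw [jacobiTheta₂_term]
  congr 1; ring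

lemma hasSum_tB {τ : ℂ} (h : 0 < τ.im) :
    HasSum (fun n : ℤ => cexp (2 * Real.pi * I * τ * (n + 1 / 2) ^ 2)) (tB τ) := by
  convert! (hasSum_jacobiTheta₂_term τ (im_two h)).mul_left (cexp (Real.pi * I * τ / 2))
    using 1
  ext n
  rw [jacobiTheta₂_term, ← Complex.exp_add]
  congr 1; ring

def parEquiv : ℤ ⊕ ℤ ≃ ℤ := (Equiv.ofBijective
  (fun x : ℤ ⊕ ℤ => Sum.elim (fun n => 2 * n) (fun n => 2 * n + 1) x) (by
    constructor
    · rintro (a | a) (b | b) hab <;> simp only [Sum.elim_inl, Sum.elim_inr] at hab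
      · congr 1; omega
      · omega
      · omega
      · congr 1; omega
    · intro n
      rcases Int.even_or_odd' n with ⟨k, hk | hk⟩
      · exact ⟨Sum.inl k, hk.symm⟩
      · exact ⟨Sum.inr k, hk.symm⟩))

lemma hasSum_parity {g : ℤ → ℂ} {a b : ℂ} (ha : HasSum (fun n => g (2 * n)) a)
    (hb : HasSum (fun n => g (2 * n + 1)) b) : HasSum g (a + b) := by
  rw [← parEquiv.hasSum_iff]
  exact HasSum.sum (f := g ∘ parEquiv) ha hb

lemma theta_add {τ : ℂ} (h : 0 < τ.im) : jacobiTheta₂ 0 (τ / 2) = tA τ + tB τ := by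
  have h2 : 0 < (τ / 2).im := by simpa using h
  refine (hasSum_jacobiTheta₂_term 0 h2).unique (hasSum_parity ?_ ?_)
  · convert! hasSum_tA h using 2 with n
    rw [jacobiTheta₂_term]; congr 1; push_cast; ring
  · convert! hasSum_tB h using 2 with n
    rw [jacobiTheta₂_term]; congr 1; push_cast; ring

lemma theta_sub {τ : ℂ} (h : 0 < τ.im) : jacobiTheta₂ (1 / 2) (τ / 2) = tA τ - tB τ := by
  have h2 : 0 < (τ / 2).im := by simpa using h
  rw [sub_eq_add_neg]
  refine (hasSum_jacobiTheta₂_term (1 / 2) h2).unique (hasSum_parity ?_ ?_)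
  · convert! hasSum_tA h using 2 with n
    rw [jacobiTheta₂_term, ← Complex.exp_periodic.int_mul n
      (2 * Real.pi * I * τ * n ^ 2)]
    congr 1; push_cast; ring
  · convert! (hasSum_tB h).neg using 2 with n
    rw [jacobiTheta₂_term, ← Complex.exp_periodic.int_mul n
      (2 * Real.pi * I * τ * (n + 1 / 2) ^ 2), ← mul_neg_one, ← Complex.exp_pi_mul_I,
      ← Complex.exp_add]
    congr 1; push_cast; ring

def rt (τ : ℂ) : ℂ := (-I * (τ / 2)) ^ (1 / 2 : ℂ)

lemma ne_zero_of_im {τ : ℂ} (h : 0 < τ.im) : τ ≠ 0 := by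
  rintro rfl; simp at h

lemma rt_ne {τ : ℂ} (h : 0 < τ.im) : rt τ ≠ 0 := by
  have := ne_zero_of_im h
  unfold rt
  rw [Ne, Complex.cpow_eq_zero_iff]
  simp [this]

lemma tA_inv {τ : ℂ} (h : 0 < τ.im) : tA (-1 / τ) = rt τ * (tA τ + tB τ) := by
  have h0 := ne_zero_of_im h
  have hr := rt_ne h
  have := jacobiTheta₂_functional_equation 0 (τ / 2)
  rw [theta_add h] at this
  rw [this, tA]
  have e : (2 * (-1 / τ)) = -1 / (τ / 2) := by field_simp
  rw [e, ← rt]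
  simp
  field_simp

lemma tB_inv {τ : ℂ} (h : 0 < τ.im) : tB (-1 / τ) = rt τ * (tA τ - tB τ) := by
  have h0 := ne_zero_of_im h
  have hr := rt_ne h
  have := jacobiTheta₂_functional_equation (1 / 2) (τ / 2)
  rw [theta_sub h] at this
  rw [this, tB]
  have e : (2 * (-1 / τ)) = -1 / (τ / 2) := by field_simp
  have e2 : (1 / 2 : ℂ) / (τ / 2) = - (-1 / τ) := by field_simp
  have e3 : (-Real.pi * I * (1 / 2) ^ 2 / (τ / 2) : ℂ) = Real.pi * I * (-1 / τ) / 2 := by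
    field_simp
    try norm_num
  rw [e, e2, e3, ← rt, jacobiTheta₂_neg_left]
  field_simp

lemma rt_mul {τ : ℂ} (h : 0 < τ.im) : rt (3 * τ) * rt τ = (Real.sqrt 3 : ℂ) * (-I * (τ / 2)) := by
  have h0 := ne_zero_of_im h
  have hz : -I * (τ / 2) ≠ 0 := by simp [h0]
  have e : -I * (3 * τ / 2) = ((3 : ℝ) : ℂ) * (-I * (τ / 2)) := by push_cast; ring
  have hs : ((Real.sqrt 3 : ℝ) : ℂ) = cexp (Real.log 3 * (1 / 2)) := by
    rw [Real.sqrt_eq_rpow, Real.rpow_def_of_pos (by norm_num)]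
    push_cast; rfl
  have hz2 : -I * (τ / 2) = cexp (Complex.log (-I * (τ / 2))) := (Complex.exp_log hz).symm
  rw [rt, rt, e, Complex.cpow_def_of_ne_zero hz, Complex.cpow_def_of_ne_zero
    (mul_ne_zero (by norm_num) hz), Complex.log_ofReal_mul (by norm_num) hz, hs]
  conv_rhs => rw [hz2]
  rw [← Complex.exp_add, ← Complex.exp_add]
  congr 1
  ring

def prodEquiv : (ℤ × ℤ) ⊕ (ℤ × ℤ) ≃ ℤ × ℤ := Equiv.ofBijective
  (fun x : (ℤ × ℤ) ⊕ (ℤ × ℤ) =>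
    Sum.elim (fun p => (p.1 + p.2, 2 * p.2)) (fun p => (p.1 + p.2 + 1, 2 * p.2 + 1)) x) (by
    constructor
    · rintro (⟨a, a'⟩ | ⟨a, a'⟩) (⟨b, b'⟩ | ⟨b, b'⟩) hab <;>
        simp only [Sum.elim_inl, Sum.elim_inr, Prod.mk.injEq] at hab
      · congr 2 <;> omega
      · omega
      · omega
      · congr 2 <;> omega
    · rintro ⟨m, n⟩
      rcases Int.even_or_odd' n with ⟨k, hk | hk⟩
      · refine ⟨Sum.inl (m - k, k), ?_⟩
        simp [hk]
      · refine ⟨Sum.inr (m - k - 1, k), ?_⟩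
        simp [hk]
        ring)

lemma prodEquiv_inl (p : ℤ × ℤ) : prodEquiv (Sum.inl p) = (p.1 + p.2, 2 * p.2) := rfl

lemma prodEquiv_inr (p : ℤ × ℤ) :
    prodEquiv (Sum.inr p) = (p.1 + p.2 + 1, 2 * p.2 + 1) := rfl

lemma qq_zpow (τ : ℂ) (n : ℤ) : qq τ ^ n = cexp (2 * Real.pi * I * τ * n) := by
  rw [qq, ← Complex.exp_int_mul]; congr 1; ring

lemma hasSum_mul' {f g : ℤ → ℂ} {a b : ℂ} (hf : HasSum f a) (hg : HasSum g b) :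
    HasSum (fun p : ℤ × ℤ => f p.1 * g p.2) (a * b) := by
  have := summable_mul_of_summable_norm hf.summable.norm hg.summable.norm
  exact hf.mul hg this

lemma E13_theta {τ : ℂ} (h : 0 < τ.im) :
    E13 τ = tA τ * tA (3 * τ) + tB τ * tB (3 * τ) := by
  have h1 := hasSum_mul' (hasSum_tA h) (hasSum_tA (im_three h))
  have h2 := hasSum_mul' (hasSum_tB h) (hasSum_tB (im_three h))
  refine HasSum.tsum_eq ?_
  rw [← prodEquiv.hasSum_iff]
  refine HasSum.sum (f := (fun p : ℤ × ℤ => qq τ ^ (p.1 ^ 2 - p.1 * p.2 + p.2 ^ 2)) ∘ prodEquiv)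
    ?_ ?_
  · convert! h1 using 2 with p
    rw [Function.comp, Function.comp, prodEquiv_inl, qq_zpow]
    rw [← Complex.exp_add]
    congr 1; push_cast; ring
  · convert! h2 using 2 with p
    rw [Function.comp, Function.comp, prodEquiv_inr, qq_zpow]
    rw [← Complex.exp_add]
    congr 1; push_cast; ring

lemma im_W {τ : ℂ} (h : 0 < τ.im) : 0 < (-1 / (3 * τ)).im := by
  have h3 := im_three h
  rw [neg_div, neg_im, one_div, inv_im, neg_div, neg_neg]
  exact div_pos h3 (normSq_pos.mpr (ne_zero_of_im h3))

lemma E13_W {τ : ℂ} (h : 0 < τ.im) :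
    E13 (-1 / (3 * τ)) = (-(I * Real.sqrt 3)) * (τ * E13 τ) := by
  have h0 := ne_zero_of_im h
  have e : 3 * (-1 / (3 * τ)) = -1 / τ := by field_simp
  rw [E13_theta (im_W h), E13_theta h, e, tA_inv h, tB_inv h, tA_inv (im_three h),
    tB_inv (im_three h)]
  linear_combination (2 * (tA τ * tA (3 * τ) + tB τ * tB (3 * τ))) * rt_mul h

/-! ### covariance under the Fricke involution -/

lemma W_step {G g : ℂ → ℂ} (hG : ∀ τ : ℂ, 0 < τ.im → DifferentiableAt ℂ G τ)
    (hW : ∀ τ : ℂ, 0 < τ.im → G (-1 / (3 * τ)) = g τ) {τ d : ℂ} (h : 0 < τ.im)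
    (hd : HasDerivAt g d τ) :
    nderiv G (-1 / (3 * τ)) = 3 * τ ^ 2 * ((2 * Real.pi * I)⁻¹ * d) := by
  have h0 := ne_zero_of_im h
  have h1 : HasDerivAt (fun z : ℂ => -1 / (3 * z)) (1 / (3 * τ ^ 2)) τ := by
    have h3 : (3 * τ : ℂ) ≠ 0 := by simp [h0]
    have := (hasDerivAt_const τ (-1 : ℂ)).div ((hasDerivAt_id τ).const_mul (3:ℂ)) h3
    refine this.congr_deriv ?_
    simp only [id]
    field_simp
    ring
  have h2 := (hG _ (im_W h)).hasDerivAt.comp τ h1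
  have h4 : g =ᶠ[nhds τ] (G ∘ fun z : ℂ => -1 / (3 * z)) := by
    filter_upwards [(isOpen_lt continuous_const Complex.continuous_im).mem_nhds h] with z hz
    exact (hW z hz).symm
  have h5 := (h2.congr_of_eventuallyEq h4).unique hd
  rw [nderiv, ← h5]
  field_simp

lemma W_gen {G f0 f1 f2 f3 : ℂ → ℂ} (hG : ∀ τ : ℂ, 0 < τ.im → DifferentiableAt ℂ G τ)
    (d0 : ∀ τ : ℂ, 0 < τ.im → DifferentiableAt ℂ f0 τ)
    (d1 : ∀ τ : ℂ, 0 < τ.im → DifferentiableAt ℂ f1 τ)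
    (d2 : ∀ τ : ℂ, 0 < τ.im → DifferentiableAt ℂ f2 τ)
    (d3 : ∀ τ : ℂ, 0 < τ.im → DifferentiableAt ℂ f3 τ) (n : ℕ) (c a0 a1 a2 a3 : ℂ)
    (hW : ∀ τ : ℂ, 0 < τ.im → G (-1 / (3 * τ)) = c * (a0 * τ ^ (n + 1) * f0 τ
      + a1 * τ ^ (n + 2) * f1 τ + a2 * τ ^ (n + 3) * f2 τ + a3 * τ ^ (n + 4) * f3 τ))
    (τ : ℂ) (h : 0 < τ.im) :
    nderiv G (-1 / (3 * τ)) = c * (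
      3 * (n + 1) * (2 * Real.pi * I)⁻¹ * a0 * τ ^ (n + 2) * f0 τ
      + 3 * τ ^ (n + 3) * (a0 * nderiv f0 τ + (n + 2) * (2 * Real.pi * I)⁻¹ * a1 * f1 τ)
      + 3 * τ ^ (n + 4) * (a1 * nderiv f1 τ + (n + 3) * (2 * Real.pi * I)⁻¹ * a2 * f2 τ)
      + 3 * τ ^ (n + 5) * (a2 * nderiv f2 τ + (n + 4) * (2 * Real.pi * I)⁻¹ * a3 * f3 τ)
      + 3 * τ ^ (n + 6) * (a3 * nderiv f3 τ)) := by
  have hp : ∀ (a : ℂ) (k : ℕ), HasDerivAt (fun z : ℂ => a * z ^ (k + 1)) (a * ((k + 1) * τ ^ k)) τ := by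
    intro a k
    have := (hasDerivAt_pow (k + 1) τ).const_mul a
    simpa using this
  have hd := (((((hp a0 n).mul (d0 τ h).hasDerivAt).add
    ((hp a1 (n + 1)).mul (d1 τ h).hasDerivAt)).add
    ((hp a2 (n + 2)).mul (d2 τ h).hasDerivAt)).add
    ((hp a3 (n + 3)).mul (d3 τ h).hasDerivAt)).const_mul c
  rw [W_step hG hW h hd]
  simp only [nderiv]
  push_cast
  ring

def f1 : ℂ → ℂ := nderiv E13
def f2 : ℂ → ℂ := nderiv f1
def f3 : ℂ → ℂ := nderiv f2
def f4 : ℂ → ℂ := nderiv f3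

def h1 : ℂ → ℂ := hs h0
def h2 : ℂ → ℂ := hs h1
def h3 : ℂ → ℂ := hs h2
def h4 : ℂ → ℂ := hs h3
lemma h1_diff : DifferentiableOn ℂ h1 (Metric.ball 0 1) := hs_diff h0_diff
lemma h2_diff : DifferentiableOn ℂ h2 (Metric.ball 0 1) := hs_diff h1_diff
lemma h3_diff : DifferentiableOn ℂ h3 (Metric.ball 0 1) := hs_diff h2_diff
lemma h4_diff : DifferentiableOn ℂ h4 (Metric.ball 0 1) := hs_diff h3_diff

lemma s0 : (∀ τ : ℂ, 0 < τ.im → DifferentiableAt ℂ E13 τ) ∧ ∀ τ : ℂ, 0 < τ.im →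
    f1 τ = 0 + 6 * qq τ + (3 * 6) * qq τ ^ 3 + (4 * 6) * qq τ ^ 4
      + qq τ ^ 5 * h1 (qq τ) :=
  step h0_diff 1 6 6 6 (fun _ h => E13_eq h)
lemma s1 : (∀ τ : ℂ, 0 < τ.im → DifferentiableAt ℂ f1 τ) ∧ ∀ τ : ℂ, 0 < τ.im →
    f2 τ = 0 + 6 * qq τ + (3 * (3 * 6)) * qq τ ^ 3 + (4 * (4 * 6)) * qq τ ^ 4
      + qq τ ^ 5 * h2 (qq τ) :=
  step h1_diff 0 6 (3 * 6) (4 * 6) s0.2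
lemma s2 : (∀ τ : ℂ, 0 < τ.im → DifferentiableAt ℂ f2 τ) ∧ ∀ τ : ℂ, 0 < τ.im →
    f3 τ = 0 + 6 * qq τ + (3 * (3 * (3 * 6))) * qq τ ^ 3 + (4 * (4 * (4 * 6))) * qq τ ^ 4
      + qq τ ^ 5 * h3 (qq τ) :=
  step h2_diff 0 6 (3 * (3 * 6)) (4 * (4 * 6)) s1.2
lemma s3 : (∀ τ : ℂ, 0 < τ.im → DifferentiableAt ℂ f3 τ) ∧ ∀ τ : ℂ, 0 < τ.im →
    f4 τ = 0 + 6 * qq τ + (3 * (3 * (3 * (3 * 6)))) * qq τ ^ 3 + (4 * (4 * (4 * (4 * 6)))) * qq τ ^ 4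
      + qq τ ^ 5 * h4 (qq τ) :=
  step h3_diff 0 6 (3 * (3 * (3 * 6))) (4 * (4 * (4 * 6))) s2.2

lemma f1_eq {τ : ℂ} (h : 0 < τ.im) : f1 τ = 6 * qq τ + 18 * qq τ ^ 3 + 24 * qq τ ^ 4
    + qq τ ^ 5 * h1 (qq τ) := by
  rw [s0.2 τ h]; ring
lemma f2_eq {τ : ℂ} (h : 0 < τ.im) : f2 τ = 6 * qq τ + 54 * qq τ ^ 3 + 96 * qq τ ^ 4
    + qq τ ^ 5 * h2 (qq τ) := by
  rw [s1.2 τ h]; ring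
lemma f3_eq {τ : ℂ} (h : 0 < τ.im) : f3 τ = 6 * qq τ + 162 * qq τ ^ 3 + 384 * qq τ ^ 4
    + qq τ ^ 5 * h3 (qq τ) := by
  rw [s2.2 τ h]; ring
lemma f4_eq {τ : ℂ} (h : 0 < τ.im) : f4 τ = 6 * qq τ + 486 * qq τ ^ 3 + 1536 * qq τ ^ 4
    + qq τ ^ 5 * h4 (qq τ) := by
  rw [s3.2 τ h]; ring

def P (x y z u v : ℂ) : ℂ :=
  x * v * (x * z - 2 * y ^ 2) - x ^ 2 * u ^ 2 + 2 * y * (x * z + 4 * y ^ 2) * u - 9 * y ^ 2 * z ^ 2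

def F (τ : ℂ) : ℂ := P (E13 τ) (f1 τ) (f2 τ) (f3 τ) (f4 τ)

lemma F_W {τ : ℂ} (h : 0 < τ.im) : F (-1 / (3 * τ)) = 3 ^ 8 * τ ^ 16 * F τ := by
  set c : ℂ := -(I * Real.sqrt 3) with hc
  have hc4 : c ^ 4 = 9 := by
    have e : ((Real.sqrt 3 : ℝ) : ℂ) ^ 2 = 3 := by
      rw [← Complex.ofReal_pow, Real.sq_sqrt (by norm_num)]; norm_num
    have : c ^ 4 = (I ^ 2) ^ 2 * (((Real.sqrt 3 : ℝ) : ℂ) ^ 2) ^ 2 := by rw [hc]; ring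
    rw [this, e, I_sq]; norm_num
  set κ : ℂ := (2 * Real.pi * I)⁻¹ with hκ
  have d0 : ∀ τ : ℂ, 0 < τ.im → DifferentiableAt ℂ E13 τ := s0.1
  have d1 : ∀ τ : ℂ, 0 < τ.im → DifferentiableAt ℂ f1 τ := s1.1
  have d2 : ∀ τ : ℂ, 0 < τ.im → DifferentiableAt ℂ f2 τ := s2.1
  have d3 : ∀ τ : ℂ, 0 < τ.im → DifferentiableAt ℂ f3 τ := s3.1
  have w0 : ∀ τ : ℂ, 0 < τ.im → E13 (-1 / (3 * τ)) = c * (1 * τ ^ (0 + 1) * E13 τ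
      + 0 * τ ^ (0 + 2) * f1 τ + 0 * τ ^ (0 + 3) * f2 τ + 0 * τ ^ (0 + 4) * f3 τ) := by
    intro τ h; rw [E13_W h]; ring
  have w1 : ∀ τ : ℂ, 0 < τ.im → f1 (-1 / (3 * τ)) = c * ((3 * κ) * τ ^ (1 + 1) * E13 τ
      + 3 * τ ^ (1 + 2) * f1 τ + 0 * τ ^ (1 + 3) * f2 τ + 0 * τ ^ (1 + 4) * f3 τ) := by
    intro τ h
    rw [f1, W_gen d0 d0 d1 d2 d3 _ _ _ _ _ _ w0 τ h, ← f1, ← hκ]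
    push_cast; ring
  have w2 : ∀ τ : ℂ, 0 < τ.im → f2 (-1 / (3 * τ)) = c * ((18 * κ ^ 2) * τ ^ (2 + 1) * E13 τ
      + (36 * κ) * τ ^ (2 + 2) * f1 τ + 9 * τ ^ (2 + 3) * f2 τ + 0 * τ ^ (2 + 4) * f3 τ) := by
    intro τ h
    rw [f2, W_gen d1 d0 d1 d2 d3 _ _ _ _ _ _ w1 τ h, ← f2, ← f1, ← hκ]
    push_cast; ring
  have w3 : ∀ τ : ℂ, 0 < τ.im → f3 (-1 / (3 * τ)) = c * ((162 * κ ^ 3) * τ ^ (3 + 1) * E13 τ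
      + (486 * κ ^ 2) * τ ^ (3 + 2) * f1 τ + (243 * κ) * τ ^ (3 + 3) * f2 τ
      + 27 * τ ^ (3 + 4) * f3 τ) := by
    intro τ h
    rw [f3, W_gen d2 d0 d1 d2 d3 _ _ _ _ _ _ w2 τ h, ← f3, ← f2, ← f1, ← hκ]
    push_cast; ring
  have w4 : f4 (-1 / (3 * τ)) = c * ((1944 * κ ^ 4) * τ ^ 5 * E13 τ
      + (7776 * κ ^ 3) * τ ^ 6 * f1 τ + (5832 * κ ^ 2) * τ ^ 7 * f2 τ
      + (1296 * κ) * τ ^ 8 * f3 τ + 81 * τ ^ 9 * f4 τ) := by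
    rw [f4, W_gen d3 d0 d1 d2 d3 _ _ _ _ _ _ w3 τ h, ← f4, ← f3, ← f2, ← f1, ← hκ]
    push_cast; ring
  have e : F (-1 / (3 * τ)) = c ^ 4 * (3 ^ 6 * τ ^ 16 * F τ) := by
    rw [F, w0 τ h, w1 τ h, w2 τ h, w3 τ h, w4, F]
    simp only [P]
    ring
  rw [e, hc4]; ring

/-! ### vanishing to order five at the cusp -/

def T (G p : ℂ → ℂ) : Prop := Differentiable ℂ p ∧ ∃ ψ : ℂ → ℂ,
  DifferentiableOn ℂ ψ (Metric.ball 0 1) ∧ ∀ q, G q = p q + q ^ 5 * ψ q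

lemma T.mul {G p H r : ℂ → ℂ} (a : T G p) (b : T H r) :
    T (fun q => G q * H q) (fun q => p q * r q) := by
  obtain ⟨hp, u, hu, eu⟩ := a
  obtain ⟨hr, v, hv, ev⟩ := b
  refine ⟨hp.mul hr, fun q => u q * r q + p q * v q + q ^ 5 * u q * v q, ?_, fun q => ?_⟩
  · have := hp.differentiableOn (s := Metric.ball 0 1)
    have := hr.differentiableOn (s := Metric.ball 0 1)
    fun_prop
  · simp only [eu, ev]; ring

lemma T.lin {G p H r : ℂ → ℂ} (a : T G p) (c : ℂ) (b : T H r) :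
    T (fun q => G q + c * H q) (fun q => p q + c * r q) := by
  obtain ⟨hp, u, hu, eu⟩ := a
  obtain ⟨hr, v, hv, ev⟩ := b
  refine ⟨hp.add (hr.const_mul c), fun q => u q + c * v q, ?_, fun q => ?_⟩
  · fun_prop
  · simp only [eu, ev]; ring

lemma T.base {u : ℂ → ℂ} (hu : DifferentiableOn ℂ u (Metric.ball 0 1)) (a b c d : ℂ) :
    T (fun q => a + b * q + c * q ^ 3 + d * q ^ 4 + q ^ 5 * u q)
      (fun q => a + b * q + c * q ^ 3 + d * q ^ 4) :=
  ⟨by fun_prop, u, hu, fun _ => rfl⟩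

lemma T.P {x y z u v xp yp zp up vp : ℂ → ℂ} (hx : T x xp) (hy : T y yp) (hz : T z zp)
    (hu : T u up) (hv : T v vp) :
    T (fun q => P (x q) (y q) (z q) (u q) (v q)) (fun q => P (xp q) (yp q) (zp q) (up q) (vp q)) := by
  have h1 := (hx.mul hv).mul ((hx.mul hz).lin (-2) (hy.mul hy))
  have h2 := (hx.mul hx).mul (hu.mul hu)
  have h3 := (hy.mul ((hx.mul hz).lin 4 (hy.mul hy))).mul hu
  have h4 := (hy.mul hy).mul (hz.mul hz)
  have h5 := ((h1.lin (-1) h2).lin 2 h3).lin (-9) h4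
  convert h5 using 1 <;> · ext q; simp only [E13proof.P]; ring

lemma F_cusp : ∃ ψ : ℂ → ℂ, DifferentiableOn ℂ ψ (Metric.ball 0 1) ∧
    ∀ τ : ℂ, 0 < τ.im → F τ = qq τ ^ 5 * ψ (qq τ) := by
  obtain ⟨_, ψ, hψ, e⟩ := T.P (T.base h0_diff 1 6 6 6) (T.base h1_diff 0 6 18 24)
    (T.base h2_diff 0 6 54 96) (T.base h3_diff 0 6 162 384) (T.base h4_diff 0 6 486 1536)
  refine ⟨fun q => ((-127008) * q ^ 3 + (217728) * q ^ 4 + (248832) * q ^ 5 + (508032) * q ^ 6 + (594864) * q ^ 7 + (-4250880) * q ^ 8 + (-11788416) * q ^ 9 + (-12628224) * q ^ 10 + (-5308416) * q ^ 11) + ψ q, by fun_prop, fun τ h => ?_⟩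
  have := e (qq τ)
  rw [F, f1_eq h, f2_eq h, f3_eq h, f4_eq h, E13_eq h]
  simp only [zero_add] at this
  rw [this]
  simp only [P]
  ring

/-! ### the maximum principle argument -/

lemma qq_add_int (τ : ℂ) (n : ℤ) : qq (τ + n) = qq τ := by
  unfold qq
  rw [← Complex.exp_periodic.int_mul n (2 * Real.pi * I * τ)]
  congr 1; ring

def ph (τ : ℂ) : ℝ := ‖F τ‖ * τ.im ^ 8

lemma ph_nonneg {τ : ℂ} (h : 0 < τ.im) : 0 ≤ ph τ := by unfold ph; positivity

lemma im_W_eq (τ : ℂ) : (-1 / (3 * τ)).im = τ.im / (3 * ‖τ‖ ^ 2) := by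
  rw [neg_div, neg_im, one_div, inv_im, neg_div, neg_neg, ← Complex.normSq_eq_norm_sq]
  simp only [Complex.normSq_mul, Complex.mul_im]
  norm_num
  rcases eq_or_ne τ 0 with rfl | h
  · simp
  · have : Complex.normSq τ ≠ 0 := by simpa using h
    field_simp
    try norm_num
    ring

lemma ph_W {τ : ℂ} (h : 0 < τ.im) : ph (-1 / (3 * τ)) = ph τ := by
  have h0 : ‖τ‖ ≠ 0 := by simpa using ne_zero_of_im h
  rw [ph, ph, F_W h, im_W_eq]
  simp only [norm_mul, norm_pow]
  norm_num
  field_simp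
  try norm_num
  ring

lemma ph_T {τ : ℂ} (h : 0 < τ.im) (n : ℤ) : ph (τ + n) = ph τ := by
  obtain ⟨ψ, -, e⟩ := F_cusp
  have him : (τ + n).im = τ.im := by simp
  have hh : 0 < (τ + n).im := by rw [him]; exact h
  rw [ph, ph, e _ h, e _ hh, qq_add_int, him]

lemma reduce (n : ℕ) : ∀ τ : ℂ, 0 < τ.im → 0.27 * 0.97 ^ n ≤ τ.im →
    ∃ σ : ℂ, 0.27 ≤ σ.im ∧ ph σ = ph τ := by
  induction n with
  | zero => intro τ _ h; exact ⟨τ, by simpa using h, rfl⟩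
  | succ n ih =>
    intro τ h0 h
    by_cases hy : 0.27 ≤ τ.im
    · exact ⟨τ, hy, rfl⟩
    push Not at hy
    set t : ℂ := τ + ((-round τ.re : ℤ) : ℂ) with ht
    have him : t.im = τ.im := by simp [ht]
    have hre : |t.re| ≤ 1 / 2 := by
      have := abs_sub_round τ.re
      simpa [ht, sub_eq_add_neg] using this
    have ht0 : 0 < t.im := by rw [him]; exact h0
    have hn : 3 * ‖t‖ ^ 2 ≤ 0.97 := by
      rw [← Complex.normSq_eq_norm_sq, Complex.normSq_apply, him]
      have := abs_le.mp hre
      nlinarith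
    have hpos : 0 < 3 * ‖t‖ ^ 2 := by
      have : 0 < ‖t‖ := norm_pos_iff.mpr (ne_zero_of_im ht0)
      positivity
    obtain ⟨σ, h1, h2⟩ := ih (-1 / (3 * t)) (im_W ht0) (by
      rw [im_W_eq, le_div_iff₀ hpos, him]
      have : (0:ℝ) < 0.27 * 0.97 ^ n := by positivity
      calc 0.27 * 0.97 ^ n * (3 * ‖t‖ ^ 2) ≤ 0.27 * 0.97 ^ n * 0.97 := by gcongr
        _ = 0.27 * 0.97 ^ (n + 1) := by ring
        _ ≤ τ.im := h)
    exact ⟨σ, h1, by rw [h2, ph_W ht0, ht, ph_T h0]⟩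

lemma reduce' {τ : ℂ} (h : 0 < τ.im) : ∃ σ : ℂ, 0.27 ≤ σ.im ∧ ph σ = ph τ := by
  obtain ⟨n, hn⟩ := exists_pow_lt_of_lt_one (show 0 < τ.im / 0.27 by positivity)
    (show (0.97 : ℝ) < 1 by norm_num)
  rw [lt_div_iff₀ (by norm_num)] at hn
  exact reduce n τ h (by linarith)

lemma ph_eq {ψ : ℂ → ℂ} (e : ∀ τ : ℂ, 0 < τ.im → F τ = qq τ ^ 5 * ψ (qq τ)) {τ : ℂ}
    (h : 0 < τ.im) :
    ph τ = Real.exp (-10 * Real.pi * τ.im) * τ.im ^ 8 * ‖ψ (qq τ)‖ := by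
  rw [ph, e τ h, norm_mul, norm_pow, qq_norm, ← Real.exp_nat_mul]
  rw [show ((5 : ℕ) : ℝ) * (-2 * Real.pi * τ.im) = -10 * Real.pi * τ.im by push_cast; ring]
  ring

lemma ph_bdd : ∃ B : ℝ, ∀ τ : ℂ, 0 < τ.im → ph τ ≤ B := by
  obtain ⟨ψ, hψ, e⟩ := F_cusp
  have hr : Real.exp (-2 * Real.pi * 0.27) < 1 := by
    rw [Real.exp_lt_one_iff]; nlinarith [Real.pi_pos]
  obtain ⟨K, hK⟩ := (isCompact_closedBall (0:ℂ) (Real.exp (-2 * Real.pi * 0.27))).exists_bound_of_continuousOn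
    (hψ.continuousOn.mono (Metric.closedBall_subset_ball hr))
  refine ⟨(Nat.factorial 8 : ℝ) * K, fun τ h => ?_⟩
  obtain ⟨σ, h1, h2⟩ := reduce' h
  have hσ : 0 < σ.im := by linarith
  rw [← h2, ph_eq e hσ]
  have hb : ‖ψ (qq σ)‖ ≤ K := by
    apply hK
    simp only [mem_closedBall_zero_iff, qq_norm]
    apply Real.exp_le_exp.mpr
    nlinarith [Real.pi_pos]
  have hc : Real.exp (-10 * Real.pi * σ.im) * σ.im ^ 8 ≤ Nat.factorial 8 := by
    have h8 := Real.pow_div_factorial_le_exp σ.im hσ.le 8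
    rw [div_le_iff₀ (by positivity)] at h8
    have : Real.exp (-10 * Real.pi * σ.im) * Real.exp σ.im ≤ 1 := by
      rw [← Real.exp_add, Real.exp_le_one_iff]
      nlinarith [Real.pi_gt_three]
    calc _ ≤ Real.exp (-10 * Real.pi * σ.im) * (Real.exp σ.im * Nat.factorial 8) := by gcongr
      _ = (Real.exp (-10 * Real.pi * σ.im) * Real.exp σ.im) * Nat.factorial 8 := by ring
      _ ≤ 1 * Nat.factorial 8 := by gcongr
      _ = _ := one_mul _
  gcongr

lemma num_bound {y : ℝ} (hy : 0.27 ≤ y) : Real.exp (-(Real.pi * y / 2)) ≤ 0.999 * 0.95 ^ 8 := by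
  have hx : 0.4239 ≤ Real.pi * y / 2 := by nlinarith [Real.pi_gt_d2]
  rw [Real.exp_neg]
  have h1 : Real.exp 0.4239 ≤ Real.exp (Real.pi * y / 2) := Real.exp_le_exp.mpr hx
  have h2 := Real.quadratic_le_exp_of_nonneg (show (0:ℝ) ≤ 0.4239 by norm_num)
  have h3 : (1.51 : ℝ) ≤ Real.exp (Real.pi * y / 2) := le_trans (by norm_num) (h2.trans h1)
  calc (Real.exp (Real.pi * y / 2))⁻¹ ≤ (1.51)⁻¹ := by gcongr
    _ ≤ _ := by norm_num

lemma exists_qq {q : ℂ} (hq : q ≠ 0) : ∃ τ, qq τ = q := by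
  refine ⟨Complex.log q / (2 * Real.pi * I), ?_⟩
  unfold qq
  rw [mul_div_cancel₀ _ Complex.two_pi_I_ne_zero, Complex.exp_log hq]

lemma contract {B : ℝ} (hB : ∀ τ : ℂ, 0 < τ.im → ph τ ≤ B) :
    ∀ τ : ℂ, 0 < τ.im → ph τ ≤ 0.999 * B := by
  intro τ0 h0
  obtain ⟨ψ, hψ, e⟩ := F_cusp
  obtain ⟨τ, hy, h2⟩ := reduce' h0
  have h : 0 < τ.im := by linarith
  rw [← h2]
  have hB0 : 0 ≤ B := (ph_nonneg h).trans (hB τ h)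
  set y := τ.im with hyd
  set r := Real.exp (-2 * Real.pi * (0.95 * y)) with hr
  have hr0 : 0 < r := Real.exp_pos _
  have hr1 : r < 1 := by
    rw [hr, Real.exp_lt_one_iff]; nlinarith [mul_pos Real.pi_pos h]
  have hmax : ‖ψ (qq τ)‖ ≤ B * (Real.exp (10 * Real.pi * (0.95 * y)) / (0.95 * y) ^ 8) := by
    refine Complex.norm_le_of_forall_mem_frontier_norm_le (Metric.isBounded_ball (x := (0:ℂ)) (r := r))
      (hψ.diffContOnCl_ball (Metric.closedBall_subset_ball hr1)) ?_ ?_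
    · intro q hq
      rw [frontier_ball _ hr0.ne', mem_sphere_zero_iff_norm] at hq
      obtain ⟨σ, rfl⟩ := exists_qq (q := q) (by rintro rfl; simp at hq; linarith)
      rw [qq_norm, hr] at hq
      have him : σ.im = 0.95 * y := by
        have := Real.exp_injective hq
        have hp := Real.pi_pos
        nlinarith [mul_left_cancel₀ (by nlinarith : (-2 * Real.pi) ≠ 0) this]
      have hσ : 0 < σ.im := by rw [him]; positivity
      have := hB σ hσ
      rw [ph_eq e hσ, him] at this
      rw [← mul_div_assoc, le_div_iff₀ (by positivity)]
      have e2 : Real.exp (-10 * Real.pi * (0.95 * y)) * Real.exp (10 * Real.pi * (0.95 * y)) = 1 := by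
        rw [← Real.exp_add, Real.exp_eq_one_iff]; ring
      calc ‖ψ (qq σ)‖ * (0.95 * y) ^ 8
          = (Real.exp (-10 * Real.pi * (0.95 * y)) * Real.exp (10 * Real.pi * (0.95 * y)))
            * (‖ψ (qq σ)‖ * (0.95 * y) ^ 8) := by rw [e2, one_mul]
        _ = (Real.exp (-10 * Real.pi * (0.95 * y)) * (0.95 * y) ^ 8 * ‖ψ (qq σ)‖)
            * Real.exp (10 * Real.pi * (0.95 * y)) := by ring
        _ ≤ B * Real.exp (10 * Real.pi * (0.95 * y)) := by gcongr
    · rw [closure_ball _ hr0.ne', mem_closedBall_zero_iff, qq_norm]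
      apply Real.exp_le_exp.mpr
      nlinarith [mul_pos Real.pi_pos h]
  rw [ph_eq e h, ← hyd]
  have e3 : Real.exp (-10 * Real.pi * y) * Real.exp (10 * Real.pi * (0.95 * y))
      = Real.exp (-(Real.pi * y / 2)) := by
    rw [← Real.exp_add]; congr 1; ring
  calc Real.exp (-10 * Real.pi * y) * y ^ 8 * ‖ψ (qq τ)‖
      ≤ Real.exp (-10 * Real.pi * y) * y ^ 8 *
        (B * (Real.exp (10 * Real.pi * (0.95 * y)) / (0.95 * y) ^ 8)) := by gcongr
    _ = (Real.exp (-10 * Real.pi * y) * Real.exp (10 * Real.pi * (0.95 * y))) * B / 0.95 ^ 8 := by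
        rw [mul_pow]; field_simp
    _ ≤ (0.999 * 0.95 ^ 8) * B / 0.95 ^ 8 := by rw [e3]; gcongr; exact num_bound hy
    _ = 0.999 * B := by field_simp

lemma F_zero {τ : ℂ} (h : 0 < τ.im) : F τ = 0 := by
  obtain ⟨B, hB⟩ := ph_bdd
  have hn : ∀ n : ℕ, ∀ τ : ℂ, 0 < τ.im → ph τ ≤ 0.999 ^ n * B := by
    intro n
    induction n with
    | zero => simpa using hB
    | succ n ih =>
      intro τ h
      have := contract ih τ h
      rw [pow_succ']; linarith
  have hl : Filter.Tendsto (fun n : ℕ => (0.999 : ℝ) ^ n * B) Filter.atTop (nhds (0 * B)) :=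
    (tendsto_pow_atTop_nhds_zero_of_lt_one (by norm_num) (by norm_num)).mul_const B
  rw [zero_mul] at hl
  have h0 : ph τ ≤ 0 := ge_of_tendsto' hl (fun n => hn n τ h)
  have h1 : ph τ = 0 := le_antisymm h0 (ph_nonneg h)
  rw [ph, mul_eq_zero] at h1
  rcases h1 with h1 | h1
  · simpa using h1
  · exact absurd h1 (by positivity)

end E13proof

/-- The Eisenstein series `E_{1,3}` satisfies a fourth-order nonlinear ODE. -/
theorem E13_fourth_order_ODE :
    ∀ τ : ℂ, 0 < τ.im →
      E13 τ * nderiv (nderiv (nderiv (nderiv E13))) τ *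
        (E13 τ * nderiv (nderiv E13) τ - 2 * (nderiv E13 τ) ^ 2) -
      E13 τ ^ 2 * (nderiv (nderiv (nderiv E13)) τ) ^ 2 +
      2 * nderiv E13 τ * (E13 τ * nderiv (nderiv E13) τ + 4 * (nderiv E13 τ) ^ 2) *
        nderiv (nderiv (nderiv E13)) τ -
      9 * (nderiv E13 τ) ^ 2 * (nderiv (nderiv E13) τ) ^ 2 = 0 := by

  intro τ h
  exact E13proof.F_zero h
end
end
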